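/- arXiv:2507.04728 — 5 statements merged into one kernel-verified Lean document; each statement's English description precedes it below -/
import Mathlib

section
/- Let G~ be a mixed graph with underlying graph G. Then r(G~) ≥ 2m(G) − 2κ(G), i.e., the H-rank of a mixed graph is at least twice the matching number of its underlying graph minus twice the number of even cycles of the underlying graph. -/
open scoped Classical

namespace MixedPaper

universe u

/-- A mixed graph: a finite simple graph together with an orientation of a subset
of its edges.  `arc u v = true` means there is an arc from `u` to `v`. -/
structure MixedGraph (V : Type u) where
  graph : SimpleGraph V
  arc : V → V → Bool
  arc_adj : ∀ u v, arc u v → graph.Adj u v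
  arc_antisymm : ∀ u v, arc u v → ¬ arc v u

variable {V : Type u}

/-- The Hermitian adjacency matrix of a mixed graph. -/
noncomputable def MixedGraph.hMatrix [Fintype V] [DecidableEq V] (M : MixedGraph V) :
    Matrix V V ℂ := fun u v =>
  if M.arc u v then Complex.I
  else if M.arc v u then -Complex.I
  else if M.graph.Adj u v then 1 else 0

/-- The H-rank of a mixed graph: the rank of its Hermitian adjacency matrix. -/
noncomputable def MixedGraph.hRank [Fintype V] [DecidableEq V] (M : MixedGraph V) : ℕ :=
  M.hMatrix.rank

/-- The matching number of a simple graph. -/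
noncomputable def matchingNumber (G : SimpleGraph V) : ℕ :=
  sSup {k | ∃ N : G.Subgraph, N.IsMatching ∧ N.edgeSet.ncard = k}

/-- A subgraph is a cycle subgraph if it is connected and every one of its vertices
has exactly two neighbours in it. -/
def IsCycleSubgraph {G : SimpleGraph V} (C : G.Subgraph) : Prop :=
  C.Connected ∧ ∀ v ∈ C.verts, {w | C.Adj v w}.ncard = 2

/-- κ(G) : the number of even cycles of G. -/
noncomputable def evenCycleCount (G : SimpleGraph V) : ℕ :=
  {C : G.Subgraph | IsCycleSubgraph C ∧ Even C.verts.ncard}.ncard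

/-- c(G) = |E(G)| - |V(G)| + ω(G), the cyclomatic number. -/
noncomputable def cyclomatic [Fintype V] (G : SimpleGraph V) : ℤ :=
  (G.edgeSet.ncard : ℤ) - (Fintype.card V : ℤ) + (Nat.card G.ConnectedComponent : ℤ)

/-- The induced mixed subgraph on a set of vertices. -/
def MixedGraph.induce (M : MixedGraph V) (S : Set V) : MixedGraph S where
  graph := M.graph.induce S
  arc := fun a b => M.arc a.1 b.1
  arc_adj := fun a b h => M.arc_adj a.1 b.1 h
  arc_antisymm := fun a b h => M.arc_antisymm a.1 b.1 h

/-- The mixed subgraph induced by a connected component of the underlying graph. -/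
def MixedGraph.comp (M : MixedGraph V) (c : M.graph.ConnectedComponent) :
    MixedGraph c.supp := M.induce c.supp

/-- The signature |f - b| of a closed walk in a mixed graph: the absolute difference
between the numbers of forward and backward arcs along the walk. -/
def walkSignature (M : MixedGraph V) {u : V} (w : M.graph.Walk u u) : ℕ :=
  ((w.darts.countP fun d => M.arc d.toProd.1 d.toProd.2 : ℤ) -
    (w.darts.countP fun d => M.arc d.toProd.2 d.toProd.1 : ℤ)).natAbs

/-- The signature of the cycle subgraph `C` of the mixed graph `M` satisfies the
predicate `P` (expressed via a closed walk traversing `C`; the signature does not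
depend on the choice of traversal). -/
def CycleSig (M : MixedGraph V) (C : M.graph.Subgraph) (P : ℕ → Prop) : Prop :=
  ∃ (u : V) (w : M.graph.Walk u u), w.IsCycle ∧
    {v | v ∈ w.support} = C.verts ∧ {e | e ∈ w.edges} = C.edgeSet ∧
    P (walkSignature M w)

/-- `C` is a pendant cycle with unique vertex `x` of degree 3. -/
def IsPendantCycle (G : SimpleGraph V) (C : G.Subgraph) (x : V) : Prop :=
  IsCycleSubgraph C ∧ x ∈ C.verts ∧ {w | G.Adj x w}.ncard = 3 ∧
    ∀ v ∈ C.verts, v ≠ x → {w | G.Adj v w}.ncard = 2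

/-- G has no pendant vertices (vertices of degree 1). -/
def NoPendantVerts (G : SimpleGraph V) : Prop := ∀ u : V, {w | G.Adj u w}.ncard ≠ 1

/-- The (distinct) cycles of G are pairwise vertex-disjoint. -/
def CyclesVertexDisjoint (G : SimpleGraph V) : Prop :=
  ∀ C₁ C₂ : G.Subgraph, IsCycleSubgraph C₁ → IsCycleSubgraph C₂ → C₁ ≠ C₂ →
    Disjoint C₁.verts C₂.verts

/-- The (distinct) even cycles of G are pairwise vertex-disjoint. -/
def EvenCyclesVertexDisjoint (G : SimpleGraph V) : Prop :=
  ∀ C₁ C₂ : G.Subgraph, IsCycleSubgraph C₁ → IsCycleSubgraph C₂ →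
    Even C₁.verts.ncard → Even C₂.verts.ncard → C₁ ≠ C₂ →
    Disjoint C₁.verts C₂.verts

/-- One pendant `K₂` deletion step, recorded on the surviving vertex sets:
`u` is pendant in the graph induced on `S` with unique neighbour `v` there,
and both are deleted. -/
def PendantStep (G : SimpleGraph V) (S T : Set V) : Prop :=
  ∃ u v, u ∈ S ∧ v ∈ S ∧ {w | w ∈ S ∧ G.Adj u w} = {v} ∧ T = S \ {u, v}

/-- `S` is reachable from the full vertex set by a sequence of pendant K₂ deletions. -/
def PendantReaches (G : SimpleGraph V) (S : Set V) : Prop :=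
  Relation.ReflTransGen (PendantStep G) Set.univ S

/-- The graph induced on `S` has no pendant vertices. -/
def NoPendantIn (G : SimpleGraph V) (S : Set V) : Prop :=
  ∀ u ∈ S, {w | w ∈ S ∧ G.Adj u w}.ncard ≠ 1

/-- `u` lies on some even cycle of `G`. -/
def OnEvenCycle (G : SimpleGraph V) (u : V) : Prop :=
  ∃ C : G.Subgraph, IsCycleSubgraph C ∧ Even C.verts.ncard ∧ u ∈ C.verts

/-- G is the graph ∞(p,1,q): two cycles of lengths p and q sharing exactly one vertex. -/
def IsInfinityGraph (G : SimpleGraph V) (p q : ℕ) : Prop :=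
  ∃ C₁ C₂ : G.Subgraph, IsCycleSubgraph C₁ ∧ IsCycleSubgraph C₂ ∧
    C₁.verts.ncard = p ∧ C₂.verts.ncard = q ∧
    (C₁.verts ∩ C₂.verts).ncard = 1 ∧ C₁ ⊔ C₂ = ⊤

/-- G is the theta graph θ(p,l,q): three internally disjoint paths with p, l, q
vertices respectively, joining two common endvertices. -/
def IsThetaGraph (G : SimpleGraph V) (p l q : ℕ) : Prop :=
  2 ≤ p ∧ 2 ≤ l ∧ 2 ≤ q ∧ ¬(p = 2 ∧ l = 2) ∧ ¬(p = 2 ∧ q = 2) ∧ ¬(l = 2 ∧ q = 2) ∧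
  ∃ (a b : V) (W₁ W₂ W₃ : G.Walk a b), W₁.IsPath ∧ W₂.IsPath ∧ W₃.IsPath ∧
    W₁.length = p - 1 ∧ W₂.length = l - 1 ∧ W₃.length = q - 1 ∧
    (∀ v : V, v ∈ W₁.support ∨ v ∈ W₂.support ∨ v ∈ W₃.support) ∧
    (∀ e ∈ G.edgeSet, e ∈ W₁.edges ∨ e ∈ W₂.edges ∨ e ∈ W₃.edges) ∧
    {v | v ∈ W₁.support ∧ v ∈ W₂.support} = {a, b} ∧
    {v | v ∈ W₁.support ∧ v ∈ W₃.support} = {a, b} ∧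
    {v | v ∈ W₂.support ∧ v ∈ W₃.support} = {a, b}

/-- Every odd cycle of `M` has signature satisfying `P`. -/
def OddCyclesSig (M : MixedGraph V) (P : ℕ → Prop) : Prop :=
  ∀ C : M.graph.Subgraph, IsCycleSubgraph C → Odd C.verts.ncard → CycleSig M C P

/-- Every even cycle of `M`, of length `n`, has signature `s` satisfying `P n s`. -/
def EvenCyclesSig (M : MixedGraph V) (P : ℕ → ℕ → Prop) : Prop :=
  ∀ C : M.graph.Subgraph, IsCycleSubgraph C → Even C.verts.ncard →
    CycleSig M C (P C.verts.ncard)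

/-- The whole mixed graph is a single cycle. -/
def IsCycleMG (M : MixedGraph V) : Prop := IsCycleSubgraph (⊤ : M.graph.Subgraph)

/-- The family 𝔊₀. -/
def MemG0 [Fintype V] [DecidableEq V] (M : MixedGraph V) : Prop :=
  M.graph.Connected ∧ 1 ≤ cyclomatic M.graph ∧ CyclesVertexDisjoint M.graph ∧
  NoPendantVerts M.graph ∧
  ∃ (C : M.graph.Subgraph) (x : V), IsPendantCycle M.graph C x ∧ Odd C.verts.ncard ∧
    CycleSig M C Odd ∧
    ((M.induce (C.vertsᶜ ∪ {x})).hRank : ℤ) =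
      2 * (matchingNumber (M.induce (C.vertsᶜ ∪ {x})).graph : ℤ) -
        2 * cyclomatic (M.induce (C.vertsᶜ ∪ {x})).graph

/-- The family 𝔛₁ : mixed ∞(p,1,q)-graphs, p even, q odd, whose odd cycle has odd
signature and whose even cycle C̃_p satisfies σ ≡ p (mod 4). -/
def MemX1 (M : MixedGraph V) : Prop :=
  ∃ p q : ℕ, Even p ∧ Odd q ∧ IsInfinityGraph M.graph p q ∧
    OddCyclesSig M Odd ∧ EvenCyclesSig M (fun n s => s % 4 = n % 4)

/-- The family 𝔛₂ : mixed θ(p,l,q)-graphs, p even, l q odd, whose two odd cycles have odd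
signatures and whose even cycle C̃_{q+l-2} satisfies q + l + σ ≡ 2 (mod 4). -/
def MemX2 (M : MixedGraph V) : Prop :=
  ∃ p l q : ℕ, Even p ∧ Odd l ∧ Odd q ∧ IsThetaGraph M.graph p l q ∧
    OddCyclesSig M Odd ∧ EvenCyclesSig M (fun _ s => (q + l + s) % 4 = 2)

/-- The family 𝔊₂ = 𝔊₀ ∪ 𝔛₁ ∪ 𝔛₂ together with the mixed odd cycles of odd signature. -/
def MemG2 [Fintype V] [DecidableEq V] (M : MixedGraph V) : Prop :=
  MemG0 M ∨ MemX1 M ∨ MemX2 M ∨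
    (IsCycleMG M ∧ Odd (Nat.card V) ∧ CycleSig M ⊤ Odd)

/-- The family 𝔜₁. -/
def MemY1 (M : MixedGraph V) : Prop :=
  ∃ p q : ℕ, Even p ∧ Odd q ∧ IsInfinityGraph M.graph p q ∧
    OddCyclesSig M Even ∧ EvenCyclesSig M (fun n s => s % 4 = n % 4)

/-- The family 𝔜₂. -/
def MemY2 (M : MixedGraph V) : Prop :=
  ∃ p l q : ℕ, Even p ∧ Odd l ∧ Odd q ∧ IsThetaGraph M.graph p l q ∧
    OddCyclesSig M Even ∧ EvenCyclesSig M (fun _ s => (q + l + s) % 4 = 2)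

/-- `M` is a disjoint union of `k` even cycles and one odd cycle with even signature. -/
def IsDisjointUnionEvenCyclesOddCycleEvenSig (M : MixedGraph V) (k : ℤ) : Prop :=
  (∀ c : M.graph.ConnectedComponent, IsCycleMG (M.comp c)) ∧
  (({c : M.graph.ConnectedComponent | Even (Nat.card c.supp)}.ncard : ℤ) = k) ∧
  (∃! c : M.graph.ConnectedComponent, Odd (Nat.card c.supp)) ∧
  (∀ c : M.graph.ConnectedComponent, Odd (Nat.card c.supp) →
    CycleSig (M.comp c) ⊤ Even)

/-- The family 𝔉₀. -/
def MemF0 [Fintype V] [DecidableEq V] (M : MixedGraph V) : Prop :=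
  M.graph.Connected ∧ 2 ≤ cyclomatic M.graph ∧ CyclesVertexDisjoint M.graph ∧
  NoPendantVerts M.graph ∧
  (∃ (C₀ : M.graph.Subgraph) (x₀ : V), IsPendantCycle M.graph C₀ x₀ ∧ Odd C₀.verts.ncard ∧
    CycleSig M C₀ Even ∧
    ∀ C : M.graph.Subgraph, IsCycleSubgraph C → C ≠ C₀ →
      Even C.verts.ncard ∧ CycleSig M C (fun s => s % 4 = C.verts.ncard % 4)) ∧
  (∃ (Cq : M.graph.Subgraph) (x : V), IsPendantCycle M.graph Cq x ∧ Even Cq.verts.ncard ∧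
    ∃ S : Set ↥(Cq.vertsᶜ ∪ {x}),
      PendantReaches (M.induce (Cq.vertsᶜ ∪ {x})).graph S ∧
      NoPendantIn (M.induce (Cq.vertsᶜ ∪ {x})).graph S ∧
      IsDisjointUnionEvenCyclesOddCycleEvenSig
        ((M.induce (Cq.vertsᶜ ∪ {x})).induce S)
        (cyclomatic (M.induce (Cq.vertsᶜ ∪ {x})).graph))

/-- The family 𝔉₂ = 𝔉₀ ∪ 𝔜₁ ∪ 𝔜₂ together with the mixed odd cycles of even signature. -/
def MemF2 [Fintype V] [DecidableEq V] (M : MixedGraph V) : Prop :=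
  MemF0 M ∨ MemY1 M ∨ MemY2 M ∨
    (IsCycleMG M ∧ Odd (Nat.card V) ∧ CycleSig M ⊤ Even)

/-- A connected component that is either an even cycle C̃_q with σ ≡ q (mod 4),
or an isolated vertex. -/
def GoodOtherComp (M : MixedGraph V) : Prop :=
  (IsCycleMG M ∧ Even (Nat.card V) ∧
    CycleSig M ⊤ (fun s => s % 4 = (Nat.card V) % 4)) ∨
  Nat.card V = 1

/-- A fractional matching of `G`, given as a weight function on `Sym2 V` vanishing
outside the edge set. -/
def IsFracMatching [Fintype V] [DecidableEq V] (G : SimpleGraph V) (f : Sym2 V → ℝ) : Prop :=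
  (∀ e ∈ G.edgeSet, 0 ≤ f e ∧ f e ≤ 1) ∧ (∀ e, e ∉ G.edgeSet → f e = 0) ∧
    ∀ v : V, ∑ e ∈ Finset.univ.filter (fun e : Sym2 V => v ∈ e), f e ≤ 1

/-- The fractional matching number m*(G). -/
noncomputable def fracMatchingNumber [Fintype V] [DecidableEq V] (G : SimpleGraph V) : ℝ :=
  sSup {x : ℝ | ∃ f : Sym2 V → ℝ, IsFracMatching G f ∧ ∑ e : Sym2 V, f e = x}

/-- Membership in the family ℱ : fractional matchings of total weight m*(G) taking
values in {0, 1/2, 1}. -/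
def InOptFamily [Fintype V] [DecidableEq V] (G : SimpleGraph V) (f : Sym2 V → ℝ) : Prop :=
  IsFracMatching G f ∧ (∑ e : Sym2 V, f e) = fracMatchingNumber G ∧
    ∀ e : Sym2 V, f e = 0 ∨ f e = 1 / 2 ∨ f e = 1

/-- An optimal fractional matching: a member of ℱ with the largest number of
edges of weight 1. -/
def IsOptFracMatching [Fintype V] [DecidableEq V] (G : SimpleGraph V) (f : Sym2 V → ℝ) : Prop :=
  InOptFamily G f ∧
    ∀ g : Sym2 V → ℝ, InOptFamily G g →
      {e : Sym2 V | g e = 1}.ncard ≤ {e : Sym2 V | f e = 1}.ncard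

/-- E₁(C) : the edges of `G` with exactly one endpoint on the cycle `C`. -/
def cutEdges (G : SimpleGraph V) (C : G.Subgraph) : Set (Sym2 V) :=
  {e | e ∈ G.edgeSet ∧ ∃ a b : V, e = s(a, b) ∧ a ∈ C.verts ∧ b ∉ C.verts}


/-- `σ` encodes a matching of `G`: an involution moving vertices along edges. -/
def IsMatchInv (G : SimpleGraph V) (σ : V → V) : Prop :=
  (∀ v, σ (σ v) = v) ∧ ∀ v, σ v ≠ v → G.Adj v (σ v)

/-- Two different matchings of the same vertex set yield an even cycle. -/
lemma exists_evenCycle [Fintype V] (G : SimpleGraph V) (σ τ : V → V)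
    (hσ : IsMatchInv G σ) (hτ : IsMatchInv G τ) (hfix : ∀ v, σ v = v ↔ τ v = v) (hne : σ ≠ τ) :
    ∃ C : G.Subgraph, IsCycleSubgraph C ∧ Even C.verts.ncard ∧ ∀ v ∈ C.verts, σ v ≠ v := by
  obtain ⟨hσ1, hσ2⟩ := hσ
  obtain ⟨hτ1, hτ2⟩ := hτ
  obtain ⟨x, hx⟩ := Function.ne_iff.mp hne
  let R : V → V → Prop := fun a b => b = σ a ∨ b = τ a
  have hD : ∀ v, Relation.ReflTransGen R x v → σ v ≠ τ v := by
    intro v hv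
    induction hv with
    | refl => exact hx
    | tail _ hbc ih =>
      rename_i b c _
      rcases hbc with rfl | rfl
      · intro h
        rw [hσ1] at h
        apply ih
        have := congrArg τ h
        rw [hτ1] at this
        exact this.symm
      · intro h
        rw [hτ1] at h
        apply ih
        have := congrArg σ h
        rw [hσ1] at this
        exact this.symm
  have hS : ∀ v, Relation.ReflTransGen R x v → σ v ≠ v := by
    intro v hv h
    exact hD v hv (h.trans ((hfix v).1 h).symm)
  have hS' : ∀ v, Relation.ReflTransGen R x v → τ v ≠ v := by
    intro v hv h
    exact hS v hv ((hfix v).2 h)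
  let C : G.Subgraph :=
    { verts := {v | Relation.ReflTransGen R x v}
      Adj := fun a b => Relation.ReflTransGen R x a ∧ R a b
      adj_sub := by
        rintro a b ⟨ha, rfl | rfl⟩
        · exact hσ2 a (hS a ha)
        · exact hτ2 a (hS' a ha)
      edge_vert := by
        rintro a b ⟨ha, _⟩
        exact ha
      symm := by
        constructor
        rintro a b ⟨ha, h⟩
        refine ⟨ha.tail h, ?_⟩
        rcases h with rfl | rfl
        · left; rw [hσ1]
        · right; rw [hτ1] }
  refine ⟨C, ⟨?_, ?_⟩, ?_, fun v hv => hS v hv⟩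
  · rw [SimpleGraph.Subgraph.connected_iff', SimpleGraph.connected_iff_exists_forall_reachable]
    refine ⟨⟨x, Relation.ReflTransGen.refl⟩, ?_⟩
    rintro ⟨w, hw⟩
    have hw' : Relation.ReflTransGen R x w := hw
    induction hw' with
    | refl => exact SimpleGraph.Reachable.refl _
    | tail hab hbc ih =>
      refine (ih hab).trans (SimpleGraph.Adj.reachable ?_)
      exact ⟨hab, hbc⟩
  · intro v hv
    have : {w | C.Adj v w} = {σ v, τ v} := by
      ext w
      constructor
      · rintro ⟨_, h⟩; exact h
      · intro h; exact ⟨hv, h⟩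
    rw [this]
    exact Set.ncard_pair (hD v hv)
  · rw [Set.ncard_eq_toFinset_card', ← ZMod.natCast_eq_zero_iff_even]
    have key : ∑ v ∈ C.verts.toFinset, (1 : ZMod 2) = 0 := by
      refine Finset.sum_involution (fun v _ => σ v) ?_ ?_ ?_ ?_
      · intros; decide
      · intro v hv _
        exact hS v (Set.mem_toFinset.1 hv)
      · intro v hv
        rw [Set.mem_toFinset] at hv ⊢
        exact Relation.ReflTransGen.tail hv (Or.inl rfl)
      · intro v _; exact hσ1 v
    simpa using key

/-- Reduction of the Gaussian integers modulo `1 + i`. -/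
noncomputable def redTwo : GaussianInt →+* ZMod 2 := Zsqrtd.lift ⟨1, by decide⟩

/-- The determinant, modulo two, of a graph with a unique perfect matching. -/
lemma det_ne_zero {S : Type u} [Fintype S] [DecidableEq S] (B : Matrix S S (ZMod 2))
    (hB : ∀ a b, B a b = B b a) (σ : Equiv.Perm S) (h1 : ∀ a, B (σ a) a ≠ 0)
    (huniq : ∀ τ : Equiv.Perm S, τ⁻¹ = τ → (∀ a, B (τ a) a ≠ 0) → τ = σ) (hσ : σ⁻¹ = σ) :
    B.det ≠ 0 := by
  have hsg : ∀ τ : Equiv.Perm S, Equiv.Perm.sign τ • ∏ i, B (τ i) i = ∏ i, B (τ i) i := by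
    intro τ
    rcases Int.units_eq_one_or (Equiv.Perm.sign τ) with h | h <;> rw [h]
    · simp
    · rw [Units.neg_smul, one_smul, ZMod.neg_eq_self_mod_two]
  rw [Matrix.det_apply, Finset.sum_congr rfl (fun τ _ => hsg τ),
    ← Finset.add_sum_erase _ _ (Finset.mem_univ σ)]
  have hrest : ∑ τ ∈ Finset.univ.erase σ, ∏ i, B (τ i) i = 0 := by
    refine Finset.sum_involution (fun τ _ => τ⁻¹) ?_ ?_ ?_ ?_
    · intro τ _
      have : ∏ i, B (τ⁻¹ i) i = ∏ i, B (τ i) i := by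
        rw [← Equiv.prod_comp τ (fun i => B (τ⁻¹ i) i)]
        refine Finset.prod_congr rfl fun i _ => ?_
        rw [Equiv.Perm.inv_def, Equiv.symm_apply_apply, hB]
      simp only [this]
      exact CharTwo.add_self_eq_zero _
    · intro τ hτ hne heq
      rw [Finset.prod_ne_zero_iff] at hne
      exact (Finset.mem_erase.1 hτ).1 (huniq τ heq fun a => hne a (Finset.mem_univ a))
    · intro τ hτ
      refine Finset.mem_erase.2 ⟨fun h => (Finset.mem_erase.1 hτ).1 ?_, Finset.mem_univ _⟩
      rw [← hσ, ← h, inv_inv]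
    · intro τ _; exact inv_inv τ
  rw [hrest, add_zero, Finset.prod_ne_zero_iff]
  exact fun a _ => h1 a

/-- Rank bound in the absence of even cycles on the support of the matching. -/
lemma rank_ge_of_noEven [Fintype V] [DecidableEq V] (M : MixedGraph V) (σ : V → V)
    (hσ : IsMatchInv M.graph σ)
    (hno : ∀ C : M.graph.Subgraph, IsCycleSubgraph C → Even C.verts.ncard →
      ¬ ∀ v ∈ C.verts, σ v ≠ v) :
    {v | σ v ≠ v}.ncard ≤ M.hRank := by
  let S := {v : V // σ v ≠ v}
  let A : Matrix S S GaussianInt := fun u v =>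
    if M.arc u v then ⟨0, 1⟩ else if M.arc v u then ⟨0, -1⟩
      else if M.graph.Adj u v then 1 else 0
  let B : Matrix S S (ZMod 2) := fun u v => if M.graph.Adj u v then 1 else 0
  have hAB : redTwo.mapMatrix A = B := by
    ext u v
    change redTwo (A u v) = B u v
    have e1 : redTwo ⟨0, 1⟩ = 1 := by simp [redTwo, Zsqrtd.lift]
    have e2 : redTwo ⟨0, -1⟩ = 1 := by simp [redTwo, Zsqrtd.lift]
    have a1 := M.arc_adj u v
    have a2 := fun h => (M.arc_adj v u h).symm
    simp only [A, B]
    by_cases h1 : M.arc u v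
    · rw [if_pos h1, if_pos (a1 h1), e1]
    · by_cases h2 : M.arc v u
      · rw [if_neg h1, if_pos h2, if_pos (a2 h2), e2]
      · rw [if_neg h1, if_neg h2]
        split_ifs
        · exact map_one _
        · exact map_zero _
  have hAH : GaussianInt.toComplex.mapMatrix A = M.hMatrix.submatrix Subtype.val Subtype.val := by
    ext u v
    change GaussianInt.toComplex (A u v) = M.hMatrix u v
    simp only [A, MixedGraph.hMatrix]
    split_ifs <;> simp [GaussianInt.toComplex_def]
  have hBne : ∀ a b, B a b ≠ 0 ↔ M.graph.Adj a b := by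
    intro a b; simp [B]
  let σ0 : Equiv.Perm S := Function.Involutive.toPerm
    (fun v => ⟨σ v.1, fun h => v.2 (by
      have := congrArg σ h; rwa [hσ.1, hσ.1] at this)⟩)
    (fun v => Subtype.ext (hσ.1 v.1))
  have hBdet : B.det ≠ 0 := by
    refine det_ne_zero B ?_ σ0 ?_ ?_ ?_
    · intro a b; simp [B, M.graph.adj_comm]
    · intro a; rw [hBne]; exact (hσ.2 a.1 a.2).symm
    · intro τ hτ hadj
      by_contra hne
      have hττ : ∀ a, τ (τ a) = a := by
        intro a
        have h : τ⁻¹ (τ a) = a := τ.symm_apply_apply a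
        rwa [hτ] at h
      let t : V → V := fun v => if h : σ v ≠ v then (τ ⟨v, h⟩).1 else v
      have ht : ∀ a : S, t a.1 = (τ a).1 := by
        intro a
        simp only [t, dif_pos a.2]
        rfl
      have ht' : ∀ v, ¬ σ v ≠ v → t v = v := by
        intro v hv
        simp only [t, dif_neg hv]
      have htad : ∀ a : S, M.graph.Adj a.1 (t a.1) := by
        intro a
        rw [ht]
        exact ((hBne _ _).1 (hadj a)).symm
      suffices h : IsMatchInv M.graph t ∧ (∀ v, σ v = v ↔ t v = v) ∧ σ ≠ t by
        obtain ⟨C, hC, hCe, hCv⟩ := exists_evenCycle M.graph σ t hσ h.1 h.2.1 h.2.2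
        exact hno C hC hCe hCv
      refine ⟨⟨?_, ?_⟩, ?_, ?_⟩
      · intro v
        by_cases h : σ v ≠ v
        · have h1 := ht ⟨v, h⟩
          dsimp only at h1
          rw [h1, ht, hττ]
        · rw [ht' v h, ht' v h]
      · intro v hv
        by_cases h : σ v ≠ v
        · exact htad ⟨v, h⟩
        · exact absurd (ht' v h) hv
      · intro v
        by_cases h : σ v ≠ v
        · exact ⟨fun h' => absurd h' h, fun h' => absurd h' (htad ⟨v, h⟩).ne'⟩
        · exact ⟨fun _ => ht' v h, fun _ => not_not.1 h⟩
      · intro h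
        apply hne
        ext a
        rw [← ht, ← h]
        rfl
    · exact Function.Involutive.toPerm_symm _
  have hAdet : A.det ≠ 0 := by
    intro h
    apply hBdet
    rw [← hAB, ← RingHom.map_det, h, map_zero]
  have hHdet : (M.hMatrix.submatrix (Subtype.val : S → V) (Subtype.val : S → V)).det ≠ 0 := by
    rw [← hAH, ← RingHom.map_det]
    intro h
    exact hAdet (GaussianInt.toComplex_eq_zero.1 h)
  have hrank := Matrix.rank_of_isUnit _
    ((Matrix.isUnit_iff_isUnit_det _).2 (isUnit_iff_ne_zero.2 hHdet))
  have hle := Matrix.rank_submatrix_le M.hMatrix (Subtype.val : S → V) (Subtype.val : S → V)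
  rw [hrank] at hle
  have hcard : {v | σ v ≠ v}.ncard = Fintype.card S := by
    rw [← Nat.card_coe_set_eq, ← Nat.card_eq_fintype_card]
    rfl
  rw [hcard]
  exact hle

/-- The main induction: delete an even-cycle vertex together with its partner. -/
lemma main_induction [Fintype V] [DecidableEq V] (M : MixedGraph V) (n : ℕ) :
    ∀ σ : V → V, IsMatchInv M.graph σ →
    {C : M.graph.Subgraph | (IsCycleSubgraph C ∧ Even C.verts.ncard) ∧
      ∀ v ∈ C.verts, σ v ≠ v}.ncard ≤ n →
    {v | σ v ≠ v}.ncard ≤ M.hRank + 2 * n := by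
  induction n with
  | zero =>
    intro σ hσ hn
    rw [Nat.le_zero, Set.ncard_eq_zero (Set.toFinite _)] at hn
    refine rank_ge_of_noEven M σ hσ fun C h1 h2 h3 => ?_
    have : C ∈ (∅ : Set M.graph.Subgraph) := by
      rw [← hn]; exact ⟨⟨h1, h2⟩, h3⟩
    exact this
  | succ n ih =>
    intro σ hσ hn
    by_cases hex : ∃ C : M.graph.Subgraph, (IsCycleSubgraph C ∧ Even C.verts.ncard) ∧
      ∀ v ∈ C.verts, σ v ≠ v
    · obtain ⟨C, hC, hCv⟩ := hex
      obtain ⟨x, hx⟩ := hC.1.1.nonempty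
      have hxσ := hCv x hx
      let t : V → V := fun v => if v = x ∨ v = σ x then v else σ v
      have htx : t x = x := by simp [t]
      have hmoved : ∀ v, t v ≠ v → σ v ≠ v := by
        intro v hv
        simp only [t] at hv
        split_ifs at hv with h
        · exact absurd rfl hv
        · exact hv
      have ht : IsMatchInv M.graph t := by
        refine ⟨fun v => ?_, fun v hv => ?_⟩
        · by_cases h : v = x ∨ v = σ x
          · simp only [t, if_pos h]
          · have h' : ¬ (σ v = x ∨ σ v = σ x) := by
              rintro (h1 | h1)
              · exact h (Or.inr (by rw [← h1, hσ.1]))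
              · refine h (Or.inl ?_)
                rw [← hσ.1 v, h1, hσ.1]
            simp only [t, if_neg h, if_neg h', hσ.1]
        · have h2 := hmoved v hv
          simp only [t] at hv ⊢
          split_ifs at hv ⊢ with h
          · exact absurd rfl hv
          · exact hσ.2 v h2
      have h1 := ih t ht (by
        refine Nat.lt_succ_iff.1 (lt_of_lt_of_le (Set.ncard_lt_ncard ?_ (Set.toFinite _)) hn)
        refine Set.ssubset_iff_of_subset ?_ |>.2 ⟨C, ⟨hC, hCv⟩, fun h => h.2 x hx htx⟩
        rintro D ⟨hD, hDv⟩
        exact ⟨hD, fun v hv => hmoved v (hDv v hv)⟩)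
      have h2 : {v | σ v ≠ v} ⊆ {v | t v ≠ v} ∪ {x, σ x} := by
        intro v hv
        by_cases h : v = x ∨ v = σ x
        · exact Or.inr h
        · left
          change t v ≠ v
          simp only [t, if_neg h]
          exact hv
      have h3 := (Set.ncard_le_ncard h2 (Set.toFinite _)).trans (Set.ncard_union_le _ _)
      have h4 : ({x, σ x} : Set V).ncard ≤ 2 := by
        refine (Set.ncard_insert_le _ _).trans ?_
        rw [Set.ncard_singleton]
      omega
    · have := rank_ge_of_noEven M σ hσ fun C h1 h2 h3 => hex ⟨C, ⟨h1, h2⟩, h3⟩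
      omega

/-- A matching subgraph gives a matching involution of twice the size. -/
lemma exists_matchInv [Fintype V] [DecidableEq V] (G : SimpleGraph V) (N : G.Subgraph)
    (hN : N.IsMatching) : ∃ σ : V → V, IsMatchInv G σ ∧
      {v | σ v ≠ v}.ncard = 2 * N.edgeSet.ncard := by
  have hex : ∀ v, ∃ w, (v ∈ N.verts → N.Adj v w) ∧ (v ∉ N.verts → w = v) := by
    intro v
    by_cases h : v ∈ N.verts
    · obtain ⟨w, hw, _⟩ := hN h
      exact ⟨w, fun _ => hw, fun h' => absurd h h'⟩
    · exact ⟨v, fun h' => absurd h' h, fun _ => rfl⟩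
  choose σ h1 h2 using hex
  have hsupp : {v | σ v ≠ v} = N.verts := by
    ext v
    constructor
    · intro h
      by_contra h'
      exact h (h2 v h')
    · intro h
      exact (N.adj_sub (h1 v h)).ne'
  refine ⟨σ, ⟨fun v => ?_, fun v hv => ?_⟩, ?_⟩
  · by_cases h : v ∈ N.verts
    · have hw := h1 v h
      have hmem := N.edge_vert hw.symm
      exact (hN hmem).unique (h1 _ hmem) hw.symm
    · rw [h2 v h, h2 v h]
  · have hmem : v ∈ N.verts := by rw [← hsupp]; exact hv
    exact (h1 v hmem).adj_sub
  · rw [hsupp]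
    have hs := N.spanningCoe.sum_degrees_eq_twice_card_edges
    have he : N.edgeSet.ncard = N.spanningCoe.edgeFinset.card := by
      rw [← SimpleGraph.Subgraph.edgeSet_spanningCoe, Set.ncard_eq_toFinset_card']
      rfl
    rw [he, ← hs]
    have hdeg : ∀ v, N.spanningCoe.degree v = if v ∈ N.verts then 1 else 0 := by
      intro v
      split_ifs with h
      · rw [SimpleGraph.degree_eq_one_iff_existsUnique_adj]
        exact hN h
      · rw [SimpleGraph.degree_eq_zero]
        intro w hw
        exact h (N.edge_vert hw)
    rw [Finset.sum_congr rfl (fun v _ => hdeg v), Finset.sum_boole, Set.ncard_eq_toFinset_card']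
    simp only [Nat.cast_id]
    congr 1
    ext v
    simp

/-- For any mixed graph G̃,  r(G̃) ≥ 2m(G) − 2κ(G). -/
theorem hRank_ge_twice_matching_sub_twice_evenCycles
    {V : Type u} [Fintype V] [DecidableEq V] (M : MixedGraph V) :
    2 * (matchingNumber M.graph : ℤ) - 2 * (evenCycleCount M.graph : ℤ) ≤ (M.hRank : ℤ) := by
  have hmem : matchingNumber M.graph ∈
      {k | ∃ N : M.graph.Subgraph, N.IsMatching ∧ N.edgeSet.ncard = k} := by
    refine Nat.sSup_mem ?_ ?_
    · refine ⟨_, ⊥, ?_, rfl⟩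
      intro v hv
      exact absurd hv (by simp)
    · refine ⟨Nat.card (Sym2 V), ?_⟩
      rintro k ⟨N, _, rfl⟩
      exact Set.ncard_le_card _
  obtain ⟨N, hN, hk⟩ := hmem
  obtain ⟨σ, hσ, hcard⟩ := exists_matchInv M.graph N hN
  have h := main_induction M (evenCycleCount M.graph) σ hσ
    (Set.ncard_le_ncard (fun C hC => hC.1) (Set.toFinite _))
  rw [hcard, hk] at h
  omega

end MixedPaper
end

section
/- Let G~ be a mixed graph with underlying graph G. Then r(G~) ≤ 2m*(G), i.e., the H-rank of a mixed graph is at most twice the fractional matching number of its underlying graph. -/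
open scoped Classical

namespace MixedPaper

universe u

variable {V : Type u}

theorem exists_indep_cols {m n : Type*} [Fintype m] [Fintype n] (A : Matrix m n ℂ) (r : ℕ)
    (h : A.rank = r) : ∃ p : Fin r → n, LinearIndependent ℂ (fun i => A.transpose (p i)) := by
  rw [Matrix.rank_eq_finrank_span_cols] at h
  obtain ⟨f, hf, -, hl⟩ := Submodule.exists_fun_fin_finrank_span_eq ℂ (Set.range A.col)
  subst h
  choose p hp using hf
  refine ⟨p, ?_⟩
  have : (fun i => A.transpose (p i)) = f := funext hp
  rw [this]
  exact hl

theorem exists_partial_transversal {m n : Type*} [Fintype m] [Fintype n] (A : Matrix m n ℂ) :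
    ∃ (q : Fin A.rank → m) (p : Fin A.rank → n), Function.Injective q ∧ Function.Injective p ∧
      ∀ i, A (q i) (p i) ≠ 0 := by
  obtain ⟨p, hp⟩ := exists_indep_cols A _ rfl
  obtain ⟨q, hq⟩ := exists_indep_cols (Matrix.of (fun i => A.transpose (p i))) A.rank (by
    have := LinearIndependent.rank_matrix (M := Matrix.of (fun i => A.transpose (p i))) hp
    simpa using this)
  have hpi : Function.Injective p := fun a b hab => hp.injective (by simp [hab])
  have hqi : Function.Injective q := fun a b hab => hq.injective (by simp [hab])
  have hdet : (A.submatrix q p).det ≠ 0 := by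
    have h1 : LinearIndependent ℂ (A.submatrix q p).row := hq
    rw [Matrix.linearIndependent_rows_iff_isUnit, Matrix.isUnit_iff_isUnit_det] at h1
    exact h1.ne_zero
  rw [Matrix.det_apply] at hdet
  obtain ⟨σ, -, hσ⟩ := Finset.exists_ne_zero_of_sum_ne_zero hdet
  have hprod : ∏ i, (A.submatrix q p) (σ i) i ≠ 0 := fun h0 => hσ (by rw [h0, smul_zero])
  rw [Finset.prod_ne_zero_iff] at hprod
  exact ⟨q ∘ σ, p, hqi.comp σ.injective, hpi, fun i => hprod i (Finset.mem_univ i)⟩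

theorem fracMatching_sum_le [Fintype V] [DecidableEq V] (G : SimpleGraph V) (f : Sym2 V → ℝ)
    (hf : IsFracMatching G f) : ∑ e : Sym2 V, f e ≤ fracMatchingNumber G := by
  refine le_csSup ⟨(Fintype.card (Sym2 V) : ℝ), ?_⟩ ⟨f, hf, rfl⟩
  rintro x ⟨g, hg, rfl⟩
  have : ∑ e : Sym2 V, g e ≤ ∑ e : Sym2 V, (1 : ℝ) := by
    refine Finset.sum_le_sum fun e _ => ?_
    by_cases he : e ∈ G.edgeSet
    · exact (hg.1 e he).2
    · rw [hg.2.1 e he]; exact zero_le_one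
  simpa using this

theorem sum_inj_le_one [DecidableEq V] {r : ℕ} (q : Fin r → V) (hq : Function.Injective q) (v : V) :
    ∑ i, (if v = q i then (1 : ℝ) else 0) ≤ 1 := by
  rw [Finset.sum_boole]
  have : (Finset.univ.filter (fun i => v = q i)).card ≤ 1 := by
    rw [Finset.card_le_one]
    intro a ha b hb
    simp only [Finset.mem_filter] at ha hb
    exact hq (ha.2.symm.trans hb.2)
  exact_mod_cast this

theorem half_le_fracMatchingNumber [Fintype V] [DecidableEq V] (G : SimpleGraph V) (r : ℕ)
    (q p : Fin r → V) (hq : Function.Injective q) (hp : Function.Injective p)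
    (hadj : ∀ i, G.Adj (q i) (p i)) : (r : ℝ) / 2 ≤ fracMatchingNumber G := by
  let f : Sym2 V → ℝ := fun e => ∑ i : Fin r, if s(q i, p i) = e then (1 / 2 : ℝ) else 0
  have hnn : ∀ e, 0 ≤ f e := fun e => Finset.sum_nonneg fun i _ => by split_ifs <;> norm_num
  have hv : ∀ v : V, ∑ e ∈ Finset.univ.filter (fun e : Sym2 V => v ∈ e), f e ≤ 1 := by
    intro v
    have h1 : ∑ e ∈ Finset.univ.filter (fun e : Sym2 V => v ∈ e), f e ≤
        ∑ i : Fin r, ((1 / 2 : ℝ) * (if v = q i then (1 : ℝ) else 0) +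
          1 / 2 * (if v = p i then (1 : ℝ) else 0)) := by
      rw [Finset.sum_comm]
      refine Finset.sum_le_sum fun i _ => ?_
      rw [Finset.sum_ite_eq]
      simp only [Finset.mem_filter, Finset.mem_univ, true_and, Sym2.mem_iff]
      by_cases h1 : v = q i <;> by_cases h2 : v = p i <;> simp only [h1, h2, if_true, if_false,
        or_true, true_or, or_self] <;> (try split_ifs) <;> norm_num
    rw [Finset.sum_add_distrib, ← Finset.mul_sum, ← Finset.mul_sum] at h1
    have := sum_inj_le_one q hq v
    have := sum_inj_le_one p hp v
    linarith
  have hfm : IsFracMatching G f := by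
    refine ⟨fun e he => ⟨hnn e, ?_⟩, fun e he => ?_, hv⟩
    · induction e with
      | _ a b =>
        refine le_trans ?_ (hv a)
        exact Finset.single_le_sum (f := f) (fun e _ => hnn e) (by simp)
    · refine Finset.sum_eq_zero fun i _ => if_neg ?_
      rintro rfl
      exact he (hadj i)
  have hsum : ∑ e : Sym2 V, f e = (r : ℝ) / 2 := by
    rw [Finset.sum_comm]
    simp [Finset.sum_ite_eq]
    ring
  rw [← hsum]
  exact fracMatching_sum_le G f hfm

/-- For any mixed graph G̃,  r(G̃) ≤ 2m*(G). -/
theorem hRank_le_twice_fracMatchingNumber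
    {V : Type u} [Fintype V] [DecidableEq V] (M : MixedGraph V) :
    (M.hRank : ℝ) ≤ 2 * fracMatchingNumber M.graph := by
  obtain ⟨q, p, hq, hp, hne⟩ := exists_partial_transversal M.hMatrix
  have hadj : ∀ i, M.graph.Adj (q i) (p i) := by
    intro i
    by_contra hna
    apply hne i
    have h1 : ¬ M.arc (q i) (p i) := fun h => hna (M.arc_adj _ _ h)
    have h2 : ¬ M.arc (p i) (q i) := fun h => hna (M.arc_adj _ _ h).symm
    unfold MixedGraph.hMatrix
    rw [if_neg h1, if_neg h2, if_neg hna]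
  have := half_le_fracMatchingNumber M.graph _ q p hq hp hadj
  unfold MixedGraph.hRank
  linarith

end MixedPaper
end

section
/- Let G~ be a mixed graph of order n whose underlying graph G is bipartite and whose distinct cycles are pairwise vertex-disjoint. Then H(G~) is nonsingular (equivalently r(G~) = n) if and only if both of the following hold: (a) G has a fractional perfect matching; (b) for every optimal fractional matching f of G and every even cycle C~_q of G~ with σ(C~_q) ≡ q (mod 4), the set E₁(C_q) ∩ E₂(G) is nonempty, where E₂(G) = {e ∈ E(G) : f(e) = 1}. -/
open scoped Classical

namespace MixedPaper

universe u

variable {V : Type u}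

section LinAlg

/-- weight of a permutation relative to the diagonal -/
noncomputable def pw {V : Type u} [Fintype V] [DecidableEq V] (A : Matrix V V ℂ)
    (s : Equiv.Perm V) : ℂ :=
  ((Equiv.Perm.sign s : ℤ) : ℂ) * ∏ i, (A (s i) i / A i i)

lemma pw_mul {V : Type u} [Fintype V] [DecidableEq V] (A : Matrix V V ℂ)
    (hd : ∀ i, A i i ≠ 0) (s t : Equiv.Perm V) (h : s.Disjoint t) :
    pw A (s * t) = pw A s * pw A t := by
  unfold pw
  rw [Equiv.Perm.sign_mul]
  have : ∏ i, (A ((s * t) i) i / A i i) =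
      (∏ i, (A (s i) i / A i i)) * ∏ i, (A (t i) i / A i i) := by
    rw [← Finset.prod_mul_distrib]
    refine Finset.prod_congr rfl fun i _ => ?_
    rcases h i with h1 | h1
    · have h2 : s (t i) = t i := by
        rcases h (t i) with h3 | h3
        · exact h3
        · have := t.injective h3
          rw [this, h1]
      simp [h1, h2, hd i]
    · simp [h1, hd i]
  rw [this]; push_cast; ring

lemma pw_eq_prod {V : Type u} [Fintype V] [DecidableEq V] (A : Matrix V V ℂ)
    (hd : ∀ i, A i i ≠ 0) (s : Equiv.Perm V) :
    pw A s = ∏ c ∈ s.cycleFactorsFinset, pw A c := by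
  induction s using Equiv.Perm.cycle_induction_on with
  | base_one => simp [pw, hd]
  | base_cycles s hs => simp [hs.cycleFactorsFinset_eq_singleton]
  | induction_disjoint s t hst hs ih1 ih2 =>
    rw [pw_mul A hd s t hst, hst.cycleFactorsFinset_mul_eq_union,
      Finset.prod_union hst.disjoint_cycleFactorsFinset, ← ih1, ← ih2]

lemma det_eq_pw {V : Type u} [Fintype V] [DecidableEq V] (A : Matrix V V ℂ)
    (hd : ∀ i, A i i ≠ 0) : A.det = (∏ i, A i i) * ∑ s, pw A s := by
  rw [Matrix.det_apply', Finset.mul_sum]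
  refine Finset.sum_congr rfl fun s _ => ?_
  unfold pw
  rw [Finset.prod_div_distrib]
  have : (∏ i, A i i) ≠ 0 := Finset.prod_ne_zero_iff.mpr fun i _ => hd i
  field_simp

lemma sum_pw {V : Type u} [Fintype V] [DecidableEq V] (A : Matrix V V ℂ)
    (hd : ∀ i, A i i ≠ 0)
    (hdis : ∀ c d : Equiv.Perm V, c.IsCycle → d.IsCycle → pw A c ≠ 0 → pw A d ≠ 0 → c ≠ d →
      c.Disjoint d) :
    ∑ s, pw A s = ∏ c ∈ Finset.univ.filter (fun c : Equiv.Perm V => c.IsCycle ∧ pw A c ≠ 0),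
      (1 + pw A c) := by
  rw [Finset.prod_one_add]
  rw [← Finset.sum_filter_ne_zero]
  refine Finset.sum_nbij (fun s => s.cycleFactorsFinset) ?_ ?_ ?_ ?_
  · intro s hs
    rw [Finset.mem_filter] at hs
    rw [Finset.mem_powerset]
    intro c hc
    simp only [Finset.mem_filter, Finset.mem_univ, true_and]
    refine ⟨(Equiv.Perm.mem_cycleFactorsFinset_iff.mp hc).1, ?_⟩
    have h2 := hs.2
    rw [pw_eq_prod A hd] at h2
    exact Finset.prod_ne_zero_iff.mp h2 c hc
  · exact fun a _ b _ h => Equiv.Perm.cycleFactorsFinset_injective h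
  · intro S hS
    simp only [Finset.coe_powerset, Set.mem_preimage, Set.mem_powerset_iff] at hS
    have hS' : ∀ c ∈ S, c.IsCycle ∧ pw A c ≠ 0 := by
      intro c hc
      simpa using hS hc
    have hp : (S : Set (Equiv.Perm V)).Pairwise Equiv.Perm.Disjoint := by
      intro c hc d hd' hne
      exact hdis c d (hS' c hc).1 (hS' d hd').1 (hS' c hc).2 (hS' d hd').2 hne
    have hf := (Equiv.Perm.cycleFactorsFinset_eq_finset (s := S)).mpr
      ⟨fun c hc => (hS' c hc).1, hp, rfl⟩
    refine ⟨_, ?_, hf⟩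
    simp only [Finset.coe_filter, Finset.mem_univ, true_and, Set.mem_setOf_eq]
    rw [pw_eq_prod A hd, hf]
    exact Finset.prod_ne_zero_iff.mpr fun c hc => (hS' c hc).2
  · intro s _
    exact pw_eq_prod A hd s

lemma det_ne_zero_iff_pw {V : Type u} [Fintype V] [DecidableEq V] (A : Matrix V V ℂ)
    (hd : ∀ i, A i i ≠ 0)
    (hdis : ∀ c d : Equiv.Perm V, c.IsCycle → d.IsCycle → pw A c ≠ 0 → pw A d ≠ 0 → c ≠ d →
      c.Disjoint d) :
    A.det ≠ 0 ↔ ∀ c : Equiv.Perm V, c.IsCycle → pw A c ≠ -1 := by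
  rw [det_eq_pw A hd, sum_pw A hd hdis, mul_ne_zero_iff, Finset.prod_ne_zero_iff,
    Finset.prod_ne_zero_iff]
  constructor
  · rintro ⟨-, h⟩ c hc h1
    refine h c ?_ ?_
    · simp [hc, h1]
    · rw [h1]; ring
  · intro h
    refine ⟨fun i _ => hd i, fun c hc h0 => ?_⟩
    simp only [Finset.mem_filter, Finset.mem_univ, true_and] at hc
    exact h c hc.1 (by linear_combination h0)

end LinAlg

section Frac

lemma sum_filter_mem {V : Type u} [Fintype V] [DecidableEq V] (f : Sym2 V → ℝ) (v : V) :
    ∑ e ∈ Finset.univ.filter (fun e : Sym2 V => v ∈ e), f e = ∑ w, f s(v, w) := by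
  symm
  refine Finset.sum_bij (fun w _ => s(v, w)) ?_ ?_ ?_ ?_
  · intro w _; simp
  · intro a _ b _ h; exact Sym2.congr_right.mp h
  · intro e he
    simp only [Finset.mem_filter, Finset.mem_univ, true_and] at he
    obtain ⟨w, rfl⟩ := Sym2.mem_iff_exists.mp he
    exact ⟨w, Finset.mem_univ _, rfl⟩
  · intros; rfl

lemma sum_sum_eq {V : Type u} [Fintype V] [DecidableEq V] (f : Sym2 V → ℝ)
    (hf : ∀ v, f s(v, v) = 0) : ∑ v : V, ∑ w, f s(v, w) = 2 * ∑ e, f e := by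
  simp_rw [← sum_filter_mem, Finset.sum_filter]
  rw [Finset.sum_comm, Finset.mul_sum]
  refine Finset.sum_congr rfl fun e _ => ?_
  induction e with
  | _ a b =>
    by_cases hab : a = b
    · subst hab; simp [hf]
    · rw [← Finset.sum_filter, Finset.sum_const]
      have : (Finset.univ.filter fun v => v ∈ s(a, b)) = {a, b} := by
        ext v; simp
      rw [this, Finset.card_pair hab]; simp

lemma frac_diag {V : Type u} [Fintype V] [DecidableEq V] {G : SimpleGraph V} {f : Sym2 V → ℝ}
    (hf : IsFracMatching G f) (v : V) : f s(v, v) = 0 := hf.2.1 _ (by simp)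

lemma frac_nonneg {V : Type u} [Fintype V] [DecidableEq V] {G : SimpleGraph V} {f : Sym2 V → ℝ}
    (hf : IsFracMatching G f) (e : Sym2 V) : 0 ≤ f e := by
  by_cases h : e ∈ G.edgeSet
  · exact (hf.1 e h).1
  · rw [hf.2.1 e h]

lemma frac_le {V : Type u} [Fintype V] [DecidableEq V] {G : SimpleGraph V} {f : Sym2 V → ℝ}
    (hf : IsFracMatching G f) : ∑ e, f e ≤ (Fintype.card V : ℝ) / 2 := by
  have h := sum_sum_eq f (frac_diag hf)
  have h2 : ∑ v : V, ∑ w, f s(v, w) ≤ ∑ v : V, (1 : ℝ) :=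
    Finset.sum_le_sum fun v _ => by rw [← sum_filter_mem]; exact hf.2.2 v
  simp at h2
  linarith

lemma frac_perfect {V : Type u} [Fintype V] [DecidableEq V] {G : SimpleGraph V} {f : Sym2 V → ℝ}
    (hf : IsFracMatching G f) (hs : ∑ e, f e = (Fintype.card V : ℝ) / 2) (v : V) :
    ∑ w, f s(v, w) = 1 := by
  have h := sum_sum_eq f (frac_diag hf)
  have h1 : ∀ v ∈ (Finset.univ : Finset V), ∑ w, f s(v, w) ≤ (fun _ => (1 : ℝ)) v := fun v _ => by
    rw [← sum_filter_mem]; exact hf.2.2 v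
  have h2 := (Finset.sum_eq_sum_iff_of_le h1).mp (by
    rw [h, hs]; simp; ring)
  exact h2 v (Finset.mem_univ _)

lemma exists_perm_of_frac {V : Type u} [Fintype V] [DecidableEq V] {G : SimpleGraph V}
    {f : Sym2 V → ℝ}
    (hf : IsFracMatching G f) (hs : ∑ e, f e = (Fintype.card V : ℝ) / 2) :
    ∃ p : Equiv.Perm V, ∀ v, G.Adj v (p v) := by
  have hM : (Matrix.of fun v w => f s(v, w)) ∈ doublyStochastic ℝ V := by
    rw [mem_doublyStochastic_iff_sum]
    refine ⟨fun i j => frac_nonneg hf _, fun i => frac_perfect hf hs i, fun j => ?_⟩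
    have := frac_perfect hf hs j
    simp only [Matrix.of_apply]
    rw [← this]
    exact Finset.sum_congr rfl fun i _ => by rw [Sym2.eq_swap]
  obtain ⟨w, hw0, hw1, hw⟩ := exists_eq_sum_perm_of_mem_doublyStochastic hM
  have : ∃ p, w p ≠ 0 := by
    by_contra! h
    simp [h] at hw1
  obtain ⟨p, hp⟩ := this
  refine ⟨p, fun v => ?_⟩
  have h1 := congrFun (congrFun hw v) (p v)
  rw [Matrix.sum_apply] at h1
  have h2 : w p ≤ ∑ c, (w c • Equiv.Perm.permMatrix ℝ c) v (p v) := by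
    have := Finset.single_le_sum (f := fun c => (w c • Equiv.Perm.permMatrix ℝ c) v (p v))
      (s := Finset.univ) (fun c _ => by
        simp only [Matrix.smul_apply, smul_eq_mul]
        refine mul_nonneg (hw0 c) ?_
        rw [Equiv.Perm.permMatrix, PEquiv.toMatrix_apply]
        split_ifs <;> norm_num) (Finset.mem_univ p)
    refine le_trans (le_of_eq ?_) this
    simp [Equiv.Perm.permMatrix, PEquiv.toMatrix_apply]
  rw [h1] at h2
  by_contra hadj
  have h3 : f s(v, p v) = 0 := hf.2.1 _ (by simpa using hadj)
  simp only [Matrix.of_apply, h3] at h2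
  exact hp (le_antisymm h2 (hw0 p))

lemma color_ne {V : Type u} {G : SimpleGraph V} (col : G.Coloring (Fin 2)) {u v : V}
    (h : G.Adj u v) : col u = 0 ↔ col v ≠ 0 := by
  have := col.valid h
  omega

lemma exists_tau {V : Type u} [Fintype V] [DecidableEq V] {G : SimpleGraph V}
    (col : G.Coloring (Fin 2)) (p : Equiv.Perm V) (hp : ∀ v, G.Adj v (p v)) :
    ∃ t : Equiv.Perm V, (∀ v, t (t v) = v) ∧ ∀ v, G.Adj v (t v) := by
  have hp' : ∀ v, G.Adj v (p.symm v) := fun v => by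
    have := hp (p.symm v)
    rw [Equiv.apply_symm_apply] at this
    exact this.symm
  let g : V → V := fun v => if col v = 0 then p v else p.symm v
  have hg : ∀ v, g (g v) = v := by
    intro v
    by_cases h : col v = 0
    · have := (color_ne col (hp v)).mp h
      simp [g, h, this]
    · have := (color_ne col (hp' v)).not.mp h
      rw [not_not] at this
      simp [g, h, this]
  refine ⟨⟨g, g, hg, hg⟩, hg, fun v => ?_⟩
  change G.Adj v (g v)
  by_cases h : col v = 0 <;> simp [g, h, hp, hp']

lemma exists_perm_of_det {V : Type u} [Fintype V] [DecidableEq V] (M : MixedGraph V)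
    (h : M.hMatrix.det ≠ 0) : ∃ p : Equiv.Perm V, ∀ v, M.graph.Adj v (p v) := by
  rw [Matrix.det_apply'] at h
  obtain ⟨p, -, hp⟩ := Finset.exists_ne_zero_of_sum_ne_zero h
  refine ⟨p, fun v => ?_⟩
  have h1 := Finset.prod_ne_zero_iff.mp (right_ne_zero_of_mul hp) v (Finset.mem_univ _)
  by_contra hadj
  apply h1
  have a1 : ¬ M.arc (p v) v := fun h => hadj (M.arc_adj _ _ h).symm
  have a2 : ¬ M.arc v (p v) := fun h => hadj (M.arc_adj _ _ h)
  have a3 : ¬ M.graph.Adj (p v) v := fun h => hadj h.symm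
  simp [MixedGraph.hMatrix, a1, a2, a3]

/-- indicator of a perfect matching given by an involution -/
noncomputable def matchFun {V : Type u} (t : Equiv.Perm V) : Sym2 V → ℝ :=
  fun e => if ∃ v, e = s(v, t v) then 1 else 0

lemma matchFun_mk {V : Type u} [DecidableEq V] (t : Equiv.Perm V) (ht : ∀ v, t (t v) = v) (v w : V) :
    matchFun t s(v, w) = if w = t v then 1 else 0 := by
  unfold matchFun
  have : (∃ x, s(v, w) = s(x, t x)) ↔ w = t v := by
    constructor
    · rintro ⟨x, hx⟩
      rw [Sym2.eq_iff] at hx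
      rcases hx with ⟨rfl, rfl⟩ | ⟨rfl, rfl⟩
      · rfl
      · rw [ht]
    · rintro rfl; exact ⟨v, rfl⟩
  simp only [this]

lemma matchFun_frac {V : Type u} [Fintype V] [DecidableEq V] {G : SimpleGraph V}
    (t : Equiv.Perm V) (ht : ∀ v, t (t v) = v) (hadj : ∀ v, G.Adj v (t v)) :
    IsFracMatching G (matchFun t) := by
  refine ⟨fun e _ => ?_, fun e he => ?_, fun v => ?_⟩
  · unfold matchFun; split_ifs <;> norm_num
  · unfold matchFun
    rw [if_neg]
    rintro ⟨v, rfl⟩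
    exact he (hadj v)
  · rw [sum_filter_mem]
    simp [matchFun_mk t ht]

lemma matchFun_sum {V : Type u} [Fintype V] [DecidableEq V] {G : SimpleGraph V}
    (t : Equiv.Perm V) (ht : ∀ v, t (t v) = v) (hadj : ∀ v, G.Adj v (t v)) :
    ∑ e, matchFun t e = (Fintype.card V : ℝ) / 2 := by
  have := sum_sum_eq (matchFun t) (frac_diag (matchFun_frac t ht hadj))
  simp [matchFun_mk t ht] at this
  linarith

lemma fracNumber_eq {V : Type u} [Fintype V] [DecidableEq V] {G : SimpleGraph V}
    (t : Equiv.Perm V) (ht : ∀ v, t (t v) = v) (hadj : ∀ v, G.Adj v (t v)) :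
    fracMatchingNumber G = (Fintype.card V : ℝ) / 2 := by
  refine IsGreatest.csSup_eq ⟨⟨_, matchFun_frac t ht hadj, matchFun_sum t ht hadj⟩, ?_⟩
  rintro x ⟨f, hf, rfl⟩
  exact frac_le hf

lemma ncard_le_sum {V : Type u} [Fintype V] [DecidableEq V] {f : Sym2 V → ℝ}
    (hf : ∀ e, 0 ≤ f e) : ({e : Sym2 V | f e = 1}.ncard : ℝ) ≤ ∑ e, f e := by
  have h1 : {e : Sym2 V | f e = 1} = ((Finset.univ.filter fun e => f e = 1 : Finset (Sym2 V)) :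
    Set (Sym2 V)) := by ext; simp
  rw [h1, Set.ncard_coe_finset, Finset.card_eq_sum_ones, Finset.sum_filter]
  push_cast
  refine Finset.sum_le_sum fun e _ => ?_
  split_ifs with h
  · simp [h]
  · simpa using hf e

lemma ncard_matchFun {V : Type u} [Fintype V] [DecidableEq V] (t : Equiv.Perm V) :
    ({e : Sym2 V | matchFun t e = 1}.ncard : ℝ) = ∑ e, matchFun t e := by
  have h1 : {e : Sym2 V | matchFun t e = 1} =
    ((Finset.univ.filter fun e => matchFun t e = 1 : Finset (Sym2 V)) :
    Set (Sym2 V)) := by ext; simp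
  rw [h1, Set.ncard_coe_finset, Finset.card_eq_sum_ones, Finset.sum_filter]
  push_cast
  refine Finset.sum_congr rfl fun e _ => ?_
  unfold matchFun
  split_ifs <;> simp_all

lemma matchFun_family {V : Type u} [Fintype V] [DecidableEq V] {G : SimpleGraph V}
    (t : Equiv.Perm V) (ht : ∀ v, t (t v) = v) (hadj : ∀ v, G.Adj v (t v)) :
    InOptFamily G (matchFun t) := by
  refine ⟨matchFun_frac t ht hadj, ?_, fun e => ?_⟩
  · rw [matchFun_sum t ht hadj, fracNumber_eq t ht hadj]
  · unfold matchFun; split_ifs <;> simp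

lemma matchFun_opt {V : Type u} [Fintype V] [DecidableEq V] {G : SimpleGraph V}
    (t : Equiv.Perm V) (ht : ∀ v, t (t v) = v) (hadj : ∀ v, G.Adj v (t v)) :
    IsOptFracMatching G (matchFun t) := by
  refine ⟨matchFun_family t ht hadj, fun g hg => ?_⟩
  have h1 := ncard_le_sum (frac_nonneg hg.1)
  have h2 := ncard_matchFun t
  have h3 := hg.2.1
  rw [fracNumber_eq t ht hadj, ← matchFun_sum t ht hadj] at h3
  rw [h3, ← h2] at h1
  exact_mod_cast h1

lemma exists_tau_of_opt {V : Type u} [Fintype V] [DecidableEq V] {G : SimpleGraph V}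
    (t : Equiv.Perm V) (ht : ∀ v, t (t v) = v) (hadj : ∀ v, G.Adj v (t v))
    (f : Sym2 V → ℝ) (hf : IsOptFracMatching G f) :
    ∃ r : Equiv.Perm V, (∀ v, r (r v) = v) ∧ (∀ v, G.Adj v (r v)) ∧ ∀ v, f s(v, r v) = 1 := by
  have hsum : ∑ e, f e = (Fintype.card V : ℝ) / 2 := by rw [hf.1.2.1, fracNumber_eq t ht hadj]
  have h1 := hf.2 _ (matchFun_family t ht hadj)
  have h1' : ({e : Sym2 V | matchFun t e = 1}.ncard : ℝ) ≤ ({e : Sym2 V | f e = 1}.ncard : ℝ) := by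
    exact_mod_cast h1
  rw [ncard_matchFun, matchFun_sum t ht hadj, ← hsum] at h1'
  have hs : {e : Sym2 V | f e = 1} = ((Finset.univ.filter fun e => f e = 1 : Finset (Sym2 V)) :
    Set (Sym2 V)) := by ext; simp
  rw [hs, Set.ncard_coe_finset, Finset.card_eq_sum_ones, Finset.sum_filter] at h1'
  push_cast at h1'
  have hle : ∀ e ∈ (Finset.univ : Finset (Sym2 V)), (if f e = 1 then (1 : ℝ) else 0) ≤ f e := by
    intro e _
    split_ifs with h
    · simp [h]
    · exact frac_nonneg hf.1.1 e
  have hval := (Finset.sum_eq_sum_iff_of_le hle).mp (le_antisymm (Finset.sum_le_sum hle) h1')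
  have hsumv := frac_perfect hf.1.1 hsum
  have huniq : ∀ v, ∃! w, f s(v, w) = 1 := by
    intro v
    have h2 : ∑ w, (if f s(v, w) = 1 then (1 : ℝ) else 0) = 1 := by
      exact (Finset.sum_congr rfl fun w _ => hval _ (Finset.mem_univ _)).trans (hsumv v)
    rw [Finset.sum_boole] at h2
    have h3 : (Finset.univ.filter fun w => f s(v, w) = 1).card = 1 := by exact_mod_cast h2
    obtain ⟨w, hw⟩ := Finset.card_eq_one.mp h3
    refine ⟨w, ?_, fun y hy => ?_⟩
    · have : w ∈ (Finset.univ.filter fun w => f s(v, w) = 1) := by rw [hw]; simp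
      simpa using this
    · have : y ∈ (Finset.univ.filter fun w => f s(v, w) = 1) := by simpa using hy
      rw [hw] at this
      simpa using this
  choose g hg hgu using huniq
  have hgg : ∀ v, g (g v) = v := by
    intro v
    refine (hgu (g v) v ?_).symm
    change f s(g v, v) = 1
    rw [Sym2.eq_swap]
    exact hg v
  refine ⟨⟨g, g, hgg, hgg⟩, hgg, fun v => ?_, hg⟩
  by_contra hna
  have h0 : f s(v, g v) = 0 := hf.1.1.2.1 _ (by simpa using hna)
  have h1 : f s(v, g v) = 1 := hg v
  rw [h0] at h1
  norm_num at h1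

end Frac

section Walks

lemma isCycleSubgraph_of_walk {V : Type u} {G : SimpleGraph V} {u : V} {w : G.Walk u u}
    (hw : w.IsCycle) : IsCycleSubgraph w.toSubgraph := by
  refine ⟨w.toSubgraph_connected, fun v hv => ?_⟩
  exact hw.ncard_neighborSet_toSubgraph_eq_two (w.mem_verts_toSubgraph.mp hv)

lemma no_chord {V : Type u} {G : SimpleGraph V} (hdisj : CyclesVertexDisjoint G)
    {C : G.Subgraph} (hC : IsCycleSubgraph C) {a b : V} (ha : a ∈ C.verts) (hb : b ∈ C.verts)
    (hab : G.Adj a b) : C.Adj a b := by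
  by_contra hn
  obtain ⟨⟨w, hw⟩⟩ : Nonempty (C.coe.Path ⟨b, hb⟩ ⟨a, ha⟩) := by
    obtain ⟨w⟩ := hC.1.coe.preconnected ⟨b, hb⟩ ⟨a, ha⟩
    exact ⟨w.toPath⟩
  have hp : (w.map C.hom).IsPath := hw.map C.hom_injective
  have hne : s(a, b) ∉ (w.map C.hom).edges := by
    rw [SimpleGraph.Walk.edges_map]
    intro h
    rw [List.mem_map] at h
    obtain ⟨e, he, h2⟩ := h
    have he' := w.edges_subset_edgeSet he
    induction e with
    | _ x y =>
      have hxy : C.Adj x y := by simpa using he'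
      rw [Sym2.map_mk] at h2
      have h3 : s((x : V), (y : V)) = s(a, b) := h2
      rw [Sym2.eq_iff] at h3
      rcases h3 with ⟨h4, h5⟩ | ⟨h4, h5⟩
      · rw [h4, h5] at hxy; exact hn hxy
      · rw [h4, h5] at hxy; exact hn hxy.symm
  have hcyc := (SimpleGraph.Walk.cons_isCycle_iff (w.map C.hom) hab).mpr ⟨hp, hne⟩
  have hC' := isCycleSubgraph_of_walk hcyc
  set W := SimpleGraph.Walk.cons hab (w.map C.hom) with hW
  have hadj : W.toSubgraph.Adj a b := by
    simp [hW, SimpleGraph.Walk.toSubgraph]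
  have hneq : C ≠ W.toSubgraph := by
    rintro h
    rw [h] at hn
    exact hn hadj
  have := hdisj C _ hC hC' hneq
  exact Set.disjoint_left.mp this ha (W.toSubgraph.edge_vert hadj)

/-- walk along a sequence of vertices -/
def seqWalk {V : Type u} {G : SimpleGraph V} (p : ℕ → V) (h : ∀ i, G.Adj (p i) (p (i + 1))) :
    ∀ n, G.Walk (p 0) (p n)
  | 0 => SimpleGraph.Walk.nil
  | n + 1 => (seqWalk p h n).concat (h n)

lemma seqWalk_support {V : Type u} {G : SimpleGraph V} (p : ℕ → V)
    (h : ∀ i, G.Adj (p i) (p (i + 1))) (n : ℕ) :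
    (seqWalk p h n).support = (List.range (n + 1)).map p := by
  induction n with
  | zero => simp [seqWalk]
  | succ n ih =>
    rw [seqWalk, SimpleGraph.Walk.support_concat, ih, List.range_succ (n := n + 1)]
    simp

lemma seqWalk_darts {V : Type u} {G : SimpleGraph V} (p : ℕ → V)
    (h : ∀ i, G.Adj (p i) (p (i + 1))) (n : ℕ) :
    (seqWalk p h n).darts = (List.range n).map (fun i => ⟨(p i, p (i + 1)), h i⟩) := by
  induction n with
  | zero => simp [seqWalk]
  | succ n ih =>
    rw [seqWalk, SimpleGraph.Walk.darts_concat, ih, List.range_succ]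
    simp

lemma seqWalk_edges {V : Type u} {G : SimpleGraph V} (p : ℕ → V)
    (h : ∀ i, G.Adj (p i) (p (i + 1))) (n : ℕ) :
    (seqWalk p h n).edges = (List.range n).map (fun i => s(p i, p (i + 1))) := by
  rw [SimpleGraph.Walk.edges, seqWalk_darts, List.map_map]
  rfl

lemma edge_inj_of_mod {V : Type u} {p : ℕ → V} {n : ℕ} (hn : 3 ≤ n)
    (hmod : ∀ i j, p i = p j ↔ i % n = j % n) {i j : ℕ} (hi : i < n) (hj : j < n)
    (h : s(p i, p (i + 1)) = s(p j, p (j + 1))) : i = j := by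
  rw [Sym2.eq_iff, hmod, hmod, hmod, hmod, Nat.mod_eq_of_lt hi, Nat.mod_eq_of_lt hj] at h
  rcases h with h | ⟨h1, h2⟩
  · exact h.1
  · exfalso
    have e : ∀ a, a < n → (a + 1) % n = a + 1 ∧ a + 1 < n ∨ (a + 1) % n = 0 ∧ a + 1 = n := by
      intro a ha
      rcases Nat.lt_or_ge (a + 1) n with h | h
      · exact Or.inl ⟨Nat.mod_eq_of_lt h, h⟩
      · have : a + 1 = n := by omega
        exact Or.inr ⟨by rw [this, Nat.mod_self], this⟩
    have := e i hi
    have := e j hj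
    omega

lemma exists_cycle_walk {V : Type u} {G : SimpleGraph V} (p : ℕ → V)
    (h : ∀ i, G.Adj (p i) (p (i + 1))) (n : ℕ) (hn : 3 ≤ n)
    (hmod : ∀ i j, p i = p j ↔ i % n = j % n) :
    ∃ w : G.Walk (p 0) (p 0), w.IsCycle ∧ (∀ v, v ∈ w.support ↔ ∃ i < n, v = p i) ∧
      (∀ e, e ∈ w.edges ↔ ∃ i < n, e = s(p i, p (i + 1))) ∧
      w.darts = (List.range n).map (fun i => ⟨(p i, p (i + 1)), h i⟩) := by
  have h0 : p n = p 0 := by rw [hmod]; simp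
  refine ⟨(seqWalk p h n).copy rfl h0, ?_, ?_, ?_, ?_⟩
  · rw [SimpleGraph.Walk.isCycle_def]
    refine ⟨?_, ?_, ?_⟩
    · rw [SimpleGraph.Walk.isTrail_def, SimpleGraph.Walk.edges_copy, seqWalk_edges]
      refine List.Nodup.map_on ?_ List.nodup_range
      intro i hi j hj hij
      exact edge_inj_of_mod hn hmod (List.mem_range.mp hi) (List.mem_range.mp hj) hij
    · intro hnil
      have := congrArg SimpleGraph.Walk.edges hnil
      rw [SimpleGraph.Walk.edges_copy, seqWalk_edges] at this
      simp at this
      omega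
    · rw [SimpleGraph.Walk.support_copy, seqWalk_support, List.range_succ_eq_map]
      simp only [List.map_cons, List.tail_cons, List.map_map]
      refine List.Nodup.map_on ?_ List.nodup_range
      intro i hi j hj hij
      simp only [Function.comp] at hij
      rw [hmod] at hij
      have h3 : i ≡ j [MOD n] := Nat.ModEq.add_right_cancel' 1 hij
      unfold Nat.ModEq at h3
      rwa [Nat.mod_eq_of_lt (List.mem_range.mp hi), Nat.mod_eq_of_lt (List.mem_range.mp hj)] at h3
  · intro v
    rw [SimpleGraph.Walk.support_copy, seqWalk_support]
    simp only [List.mem_map, List.mem_range]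
    constructor
    · rintro ⟨i, hi, rfl⟩
      refine ⟨i % n, Nat.mod_lt _ (by omega), ?_⟩
      rw [hmod, Nat.mod_mod]
    · rintro ⟨i, hi, rfl⟩
      exact ⟨i, by omega, rfl⟩
  · intro e
    rw [SimpleGraph.Walk.edges_copy, seqWalk_edges]
    simp only [List.mem_map, List.mem_range]
    constructor
    · rintro ⟨i, hi, rfl⟩; exact ⟨i, hi, rfl⟩
    · rintro ⟨i, hi, rfl⟩; exact ⟨i, hi, rfl⟩
  · rw [SimpleGraph.Walk.darts_copy, seqWalk_darts]

lemma hMatrix_mul_symm {V : Type u} [Fintype V] [DecidableEq V] (M : MixedGraph V) {a b : V}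
    (h : M.graph.Adj a b) : M.hMatrix a b * M.hMatrix b a = 1 := by
  unfold MixedGraph.hMatrix
  have h' := h.symm
  have := M.arc_antisymm a b
  by_cases h1 : M.arc a b <;> by_cases h2 : M.arc b a <;> simp_all

lemma hMatrix_ne_zero {V : Type u} [Fintype V] [DecidableEq V] (M : MixedGraph V) {a b : V}
    (h : M.graph.Adj a b) : M.hMatrix a b ≠ 0 := fun h0 => by
  have := hMatrix_mul_symm M h
  rw [h0, zero_mul] at this
  exact zero_ne_one this

lemma adj_of_hMatrix_ne_zero {V : Type u} [Fintype V] [DecidableEq V] (M : MixedGraph V) {a b : V}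
    (h : M.hMatrix a b ≠ 0) : M.graph.Adj a b := by
  by_contra hadj
  apply h
  have a1 : ¬ M.arc a b := fun h => hadj (M.arc_adj _ _ h)
  have a2 : ¬ M.arc b a := fun h => hadj (M.arc_adj _ _ h).symm
  simp [MixedGraph.hMatrix, a1, a2, hadj]

lemma prod_darts {V : Type u} [Fintype V] [DecidableEq V] (M : MixedGraph V)
    (l : List M.graph.Dart) :
    (l.map fun d => M.hMatrix d.toProd.1 d.toProd.2).prod =
      Complex.I ^ ((l.countP fun d => M.arc d.toProd.1 d.toProd.2 : ℤ) -
        (l.countP fun d => M.arc d.toProd.2 d.toProd.1 : ℤ)) := by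
  induction l with
  | nil => simp
  | cons d l ih =>
    rw [List.map_cons, List.prod_cons, ih, List.countP_cons, List.countP_cons]
    have hI : Complex.I ≠ 0 := Complex.I_ne_zero
    have hd := d.adj
    by_cases h1 : M.arc d.toProd.1 d.toProd.2
    · have h2 := M.arc_antisymm _ _ h1
      simp only [MixedGraph.hMatrix, h1, h2, if_true, Bool.false_eq_true, if_false]
      rw [← zpow_one_add₀ hI]
      congr 1
      push_cast
      simp
      ring
    · by_cases h2 : M.arc d.toProd.2 d.toProd.1
      · simp only [MixedGraph.hMatrix, h1, h2, if_true, Bool.false_eq_true, if_false]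
        rw [← Complex.inv_I, ← zpow_neg_one, ← zpow_add₀ hI]
        congr 1
        push_cast
        simp
        ring
      · simp [MixedGraph.hMatrix, h1, h2, hd]

lemma I_zpow_iff (z : ℤ) (k : ℕ) :
    Complex.I ^ z = (-1 : ℂ) ^ k ↔ z.natAbs % 4 = (2 * k) % 4 := by
  have hI : Complex.I ≠ 0 := Complex.I_ne_zero
  have key : ∀ m : ℕ, Complex.I ^ m = (-1 : ℂ) ^ k ↔ m % 4 = (2 * k) % 4 := by
    intro m
    rw [Complex.I_pow_eq_pow_mod]
    have hm : m % 4 < 4 := Nat.mod_lt _ (by norm_num)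
    have hne1 : Complex.I ≠ 1 := fun h => by simpa using congrArg Complex.re h
    have hne2 : Complex.I ≠ -1 := fun h => by simpa using congrArg Complex.re h
    have hne3 : (1 : ℂ) ≠ -1 := by norm_num
    rcases Nat.even_or_odd k with hk | hk
    · rw [hk.neg_one_pow]
      obtain ⟨r, rfl⟩ := hk
      have : 2 * (r + r) % 4 = 0 := by omega
      rw [this]
      interval_cases h : m % 4
      · simp
      · simp [hne1]
      · simp [Complex.I_sq, hne3.symm]
      · simp only [Complex.I_pow_three]
        simp
        intro h2; exact hne2 (by rw [← h2]; ring)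
    · rw [hk.neg_one_pow]
      obtain ⟨r, rfl⟩ := hk
      have : 2 * (2 * r + 1) % 4 = 2 := by omega
      rw [this]
      interval_cases h : m % 4
      · simp [hne3]
      · simp [hne2]
      · simp [Complex.I_sq]
      · simp only [Complex.I_pow_three]
        simp [hne1]
  rcases Int.natAbs_eq z with h | h
  · rw [← key]
    conv_lhs => rw [h]
    rw [zpow_natCast]
  · rw [← key]
    conv_lhs => rw [h]
    rw [zpow_neg, zpow_natCast]
    have h2 : ((-1 : ℂ) ^ k)⁻¹ = (-1) ^ k := by
      rcases neg_one_pow_eq_or ℂ k with h | h <;> rw [h] <;> norm_num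
    rw [inv_eq_iff_eq_inv, h2]

lemma signature_iff {V : Type u} [Fintype V] [DecidableEq V] (M : MixedGraph V) {a : V}
    (w : M.graph.Walk a a) (k : ℕ) :
    walkSignature M w % 4 = (2 * k) % 4 ↔
      (w.darts.map fun d => M.hMatrix d.toProd.1 d.toProd.2).prod = (-1) ^ k := by
  rw [prod_darts, I_zpow_iff]
  rfl

end Walks

section Alt

/-- An alternating cyclic sequence attached to a cyclic permutation. -/
structure AltSeq {V : Type u} (t c : Equiv.Perm V) (p : ℕ → V) (k : ℕ) : Prop where
  two_le : 2 ≤ k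
  mod : ∀ i j, p i = p j ↔ i % (2 * k) = j % (2 * k)
  ht : ∀ j, t (p (2 * j + 2)) = p (2 * j + 1)
  hc : ∀ j, c (p (2 * j)) = p (2 * j + 2)
  supp : ∀ x, c x ≠ x ↔ ∃ j < k, x = p (2 * j)
  cyc : c.IsCycle

/-- the twisted matrix -/
def altMat {V : Type u} (t : Equiv.Perm V) (H : Matrix V V ℂ) : Matrix V V ℂ :=
  (H.submatrix id t).transpose

lemma altMat_apply {V : Type u} (t : Equiv.Perm V) (H : Matrix V V ℂ) (x y : V) :
    altMat t H x y = H y (t x) := rfl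

lemma altMat_det {V : Type u} [Fintype V] [DecidableEq V] (t : Equiv.Perm V)
    (H : Matrix V V ℂ) : (altMat t H).det ≠ 0 ↔ H.det ≠ 0 := by
  rw [altMat, Matrix.det_transpose, Matrix.det_permute']
  rcases Int.units_eq_one_or (Equiv.Perm.sign t) with h | h <;> rw [h] <;> simp

lemma pw_altMat_ne_zero {V : Type u} [Fintype V] [DecidableEq V] (M : MixedGraph V)
    (t c : Equiv.Perm V) (h : pw (altMat t M.hMatrix) c ≠ 0) (x : V) :
    M.graph.Adj x (t (c x)) := by
  have h1 := Finset.prod_ne_zero_iff.mp (right_ne_zero_of_mul h) x (Finset.mem_univ _)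
  have h2 := (div_ne_zero_iff.mp h1).1
  exact adj_of_hMatrix_ne_zero M h2

lemma mul_mod_iff {k a b : ℕ} : (2 * a) % (2 * k) = (2 * b) % (2 * k) ↔ a % k = b % k := by
  rw [Nat.mul_mod_mul_left, Nat.mul_mod_mul_left]; omega

lemma prod_range_two_mul (F : ℕ → ℂ) (k : ℕ) :
    ∏ i ∈ Finset.range (2 * k), F i = ∏ j ∈ Finset.range k, (F (2 * j) * F (2 * j + 1)) := by
  induction k with
  | zero => simp
  | succ k ih =>
    rw [Finset.prod_range_succ, ← ih, show 2 * (k + 1) = 2 * k + 1 + 1 by ring,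
      Finset.prod_range_succ, Finset.prod_range_succ]
    ring

lemma prod_range_shift (F : ℕ → ℂ) (k : ℕ) (h : F k = F 0) :
    ∏ i ∈ Finset.range k, F (i + 1) = ∏ i ∈ Finset.range k, F i := by
  cases k with
  | zero => simp
  | succ n => rw [Finset.prod_range_succ, Finset.prod_range_succ', h]

lemma AltSeq.pw_eq {V : Type u} [Fintype V] [DecidableEq V] {M : MixedGraph V}
    {t c : Equiv.Perm V} {p : ℕ → V} {k : ℕ} (h : AltSeq t c p k)
    (htt : ∀ v, M.graph.Adj v (t v)) :
    pw (altMat t M.hMatrix) c =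
      -(-1) ^ k * ∏ i ∈ Finset.range (2 * k), M.hMatrix (p i) (p (i + 1)) := by
  have hinj : Set.InjOn (fun j => p (2 * j)) (Finset.range k : Set ℕ) := by
    intro i hi j hj hij
    simp only [Finset.coe_range, Set.mem_Iio] at hi hj
    have := (h.mod _ _).mp hij
    rw [mul_mod_iff, Nat.mod_eq_of_lt hi, Nat.mod_eq_of_lt hj] at this
    exact this
  have hsupp : c.support = (Finset.range k).image (fun j => p (2 * j)) := by
    ext x
    rw [Equiv.Perm.mem_support, h.supp]
    simp [eq_comm]
  have hcard : c.support.card = k := by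
    rw [hsupp, Finset.card_image_of_injOn hinj, Finset.card_range]
  unfold pw
  rw [h.cyc.sign, hcard]
  congr 1
  · push_cast; rfl
  simp only [altMat_apply]
  rw [← Finset.prod_subset (Finset.subset_univ c.support)]
  · rw [hsupp, Finset.prod_image hinj, prod_range_two_mul]
    have e1 : ∀ j, M.hMatrix (p (2 * j)) (t (c (p (2 * j)))) / M.hMatrix (p (2 * j)) (t (p (2 * j)))
        = M.hMatrix (p (2 * j)) (p (2 * j + 1)) *
          M.hMatrix (t (p (2 * j))) (p (2 * j)) := by
      intro j
      rw [h.hc, h.ht]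
      have := hMatrix_mul_symm M (htt (p (2 * j)))
      rw [div_eq_iff (hMatrix_ne_zero M (htt _)), mul_assoc, mul_comm (M.hMatrix (t _) _), this,
        mul_one]
    simp_rw [e1]
    rw [Finset.prod_mul_distrib, Finset.prod_mul_distrib]
    congr 1
    rw [← prod_range_shift (fun j => M.hMatrix (t (p (2 * j))) (p (2 * j)))]
    · refine Finset.prod_congr rfl fun j _ => ?_
      rw [show 2 * (j + 1) = 2 * j + 2 by ring, h.ht]
    · have : p (2 * k) = p (2 * 0) := by rw [h.mod]; simp
      simp only [this]
  · intro x _ hx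
    rw [Equiv.Perm.notMem_support] at hx
    rw [hx, div_self (hMatrix_ne_zero M (htt _))]

lemma exists_altSeq_of_perm {V : Type u} [Fintype V] [DecidableEq V] {G : SimpleGraph V}
    (col : G.Coloring (Fin 2)) (t : Equiv.Perm V) (ht : ∀ v, t (t v) = v)
    (htt : ∀ v, G.Adj v (t v)) (c : Equiv.Perm V) (hc : c.IsCycle)
    (hs : ∀ x, G.Adj x (t (c x))) (v0 : V) (hv0 : c v0 ≠ v0) :
    ∃ p k, AltSeq t c p k ∧ p 0 = v0 ∧ (∀ i, G.Adj (p i) (p (i + 1))) ∧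
      ∀ i, (col (p (2 * i)) = col v0) := by
  set k := orderOf c with hk
  have hk2 : 2 ≤ k := by rw [hk, hc.orderOf]; exact hc.two_le_card_support
  have hcolt : ∀ x, col (t x) ≠ col x := fun x => (col.valid (htt x)).symm
  have hcolc : ∀ x, col (c x) = col x := by
    intro x
    have h1 := col.valid (hs x)
    have h2 := hcolt (c x)
    omega
  have hcolp : ∀ n : ℕ, col ((c ^ n) v0) = col v0 := by
    intro n
    induction n with
    | zero => simp
    | succ n ih => rw [pow_succ', Equiv.Perm.mul_apply, hcolc, ih]
  have hpow : ∀ a b : ℕ, (c ^ a) v0 = (c ^ b) v0 ↔ a % k = b % k := by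
    intro a b
    rw [hk]
    change _ ↔ a ≡ b [MOD orderOf c]
    rw [← pow_eq_pow_iff_modEq, hc.pow_eq_pow_iff]
    exact ⟨fun h => ⟨v0, hv0, h⟩, fun ⟨x, hx, h⟩ => by
      obtain ⟨m, rfl⟩ := hc.exists_pow_eq hx hv0
      rw [← Equiv.Perm.mul_apply, ← Equiv.Perm.mul_apply, ← pow_add, ← pow_add, add_comm a,
        add_comm b, pow_add, pow_add, Equiv.Perm.mul_apply, Equiv.Perm.mul_apply, h]⟩
  let p : ℕ → V := fun i => if i % 2 = 0 then (c ^ (i / 2)) v0 else t ((c ^ (i / 2 + 1)) v0)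
  have pe : ∀ j, p (2 * j) = (c ^ j) v0 := by intro j; simp [p]
  have po : ∀ j, p (2 * j + 1) = t ((c ^ (j + 1)) v0) := by
    intro j
    have h1 : (2 * j + 1) % 2 = 1 := by omega
    have h2 : (2 * j + 1) / 2 = j := by omega
    simp [p, h1, h2]
  have par : ∀ i, i % (2 * k) % 2 = i % 2 := fun i => Nat.mod_mod_of_dvd i ⟨k, rfl⟩
  refine ⟨p, k, ⟨hk2, ?_, ?_, ?_, ?_, hc⟩, ?_, ?_, ?_⟩
  · intro i j
    have hne : ∀ a b, p (2 * a) ≠ p (2 * b + 1) := by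
      intro a b hab
      rw [pe, po] at hab
      have h1 := congrArg col hab
      have h2 := hcolt ((c ^ (b + 1)) v0)
      rw [hcolp] at h1 h2
      exact h2 h1.symm
    have hne2 : ∀ a b, (2 * a) % (2 * k) ≠ (2 * b + 1) % (2 * k) := by
      intro a b hab
      have h1 := par (2 * a)
      have h2 := par (2 * b + 1)
      rw [hab] at h1
      omega
    obtain ⟨a, rfl | rfl⟩ : ∃ a, i = 2 * a ∨ i = 2 * a + 1 := ⟨i / 2, by omega⟩ <;>
    obtain ⟨b, rfl | rfl⟩ : ∃ b, j = 2 * b ∨ j = 2 * b + 1 := ⟨j / 2, by omega⟩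
    · rw [pe, pe, hpow, mul_mod_iff]
    · exact ⟨fun h => absurd h (hne _ _), fun h => absurd h (hne2 _ _)⟩
    · exact ⟨fun h => absurd h.symm (hne _ _), fun h => absurd h.symm (hne2 _ _)⟩
    · rw [po, po, t.injective.eq_iff, hpow]
      have h1 : (a + 1 ≡ b + 1 [MOD k]) ↔ (a ≡ b [MOD k]) :=
        ⟨fun h => Nat.ModEq.add_right_cancel' 1 h, fun h => Nat.ModEq.add_right 1 h⟩
      have h2 : (2 * a + 1 ≡ 2 * b + 1 [MOD 2 * k]) ↔ (2 * a ≡ 2 * b [MOD 2 * k]) :=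
        ⟨fun h => Nat.ModEq.add_right_cancel' 1 h, fun h => Nat.ModEq.add_right 1 h⟩
      exact h1.trans (mul_mod_iff.symm.trans h2.symm)
  · intro j
    rw [show 2 * j + 2 = 2 * (j + 1) by ring, pe, po]
  · intro j
    rw [show 2 * j + 2 = 2 * (j + 1) by ring, pe, pe, pow_succ', Equiv.Perm.mul_apply]
  · intro x
    constructor
    · intro hx
      obtain ⟨m, rfl⟩ := hc.exists_pow_eq hv0 hx
      refine ⟨m % k, Nat.mod_lt _ (by omega), ?_⟩
      rw [pe, hpow, Nat.mod_mod]
    · rintro ⟨j, -, rfl⟩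
      rw [pe]
      intro h
      rw [← Equiv.Perm.mul_apply, ← pow_succ', pow_succ, Equiv.Perm.mul_apply] at h
      exact hv0 ((c ^ j).injective h)
  · simpa using pe 0
  · intro i
    obtain ⟨a, rfl | rfl⟩ : ∃ a, i = 2 * a ∨ i = 2 * a + 1 := ⟨i / 2, by omega⟩
    · rw [pe, po, pow_succ', Equiv.Perm.mul_apply]
      exact hs _
    · rw [po, show 2 * a + 1 + 1 = 2 * (a + 1) by ring, pe]
      exact (htt _).symm
  · intro i
    rw [pe, hcolp]

lemma exists_altSeq_of_seq {V : Type u} [Fintype V] [DecidableEq V]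
    (t : Equiv.Perm V) (p : ℕ → V) (k : ℕ) (hk : 2 ≤ k)
    (hmod : ∀ i j, p i = p j ↔ i % (2 * k) = j % (2 * k))
    (ht : ∀ j, t (p (2 * j + 2)) = p (2 * j + 1)) : ∃ c, AltSeq t c p k := by
  set l := (List.range k).map (fun j => p (2 * j)) with hl
  have hlen : l.length = k := by simp [hl]
  have hnd : l.Nodup := by
    refine List.Nodup.map_on ?_ List.nodup_range
    intro i hi j hj hij
    rw [hmod, mul_mod_iff, Nat.mod_eq_of_lt (List.mem_range.mp hi),
      Nat.mod_eq_of_lt (List.mem_range.mp hj)] at hij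
    exact hij
  have hget : ∀ i (hi : i < l.length), l[i] = p (2 * i) := by
    intro i hi; simp [hl]
  refine ⟨l.formPerm, hk, hmod, ht, ?_, ?_, List.isCycle_formPerm hnd (by omega)⟩
  · intro j
    have h1 : p (2 * j) = p (2 * (j % k)) := by rw [hmod, mul_mod_iff, Nat.mod_mod]
    have hj : j % k < l.length := by rw [hlen]; exact Nat.mod_lt _ (by omega)
    rw [h1, ← hget _ hj, List.formPerm_apply_getElem l hnd, hget]
    rw [show 2 * j + 2 = 2 * (j + 1) by ring, hmod, mul_mod_iff, hlen]
    simp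
  · intro x
    rw [← Equiv.Perm.mem_support, List.support_formPerm_of_nodup l hnd]
    · simp [hl, eq_comm]
    · intro x hx
      rw [hx] at hlen
      simp at hlen
      omega

lemma two_step_ne {k i : ℕ} (hk : 2 ≤ k) : (i + 2) % (2 * k) ≠ i % (2 * k) := by
  intro h
  have h1 : i + 2 ≡ i + 0 [MOD 2 * k] := h
  have h2 := Nat.ModEq.add_left_cancel' i h1
  unfold Nat.ModEq at h2
  rw [Nat.mod_eq_of_lt (by omega)] at h2
  simp at h2

lemma alt_propagate {V : Type u} (t : Equiv.Perm V) (htt : ∀ v, t (t v) = v)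
    (p : ℕ → V) (k : ℕ) (hk : 2 ≤ k)
    (hmod : ∀ i j, p i = p j ↔ i % (2 * k) = j % (2 * k))
    (hnb : ∀ i, t (p (i + 1)) = p (i + 2) ∨ t (p (i + 1)) = p i)
    (h1 : t (p 1) = p 2) (j : ℕ) : t (p (2 * j + 2)) = p (2 * j + 1) := by
  suffices h : t (p (2 * j + 1)) = p (2 * j + 2) by rw [← h, htt]
  induction j with
  | zero => simpa using h1
  | succ j ih =>
    rcases hnb (2 * j + 2) with h | h
    · exact h
    · exfalso
      rw [← ih] at h
      have h2 := t.injective h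
      rw [hmod] at h2
      exact two_step_ne (i := 2 * j + 1) hk h2

lemma exists_alt_shift {V : Type u} [Fintype V] [DecidableEq V] (H : Matrix V V ℂ)
    (t : Equiv.Perm V) (htt : ∀ v, t (t v) = v)
    (p : ℕ → V) (k : ℕ) (hk : 2 ≤ k)
    (hmod : ∀ i j, p i = p j ↔ i % (2 * k) = j % (2 * k))
    (hnb : ∀ i, t (p (i + 1)) = p (i + 2) ∨ t (p (i + 1)) = p i) :
    ∃ p' c, AltSeq t c p' k ∧ ∏ i ∈ Finset.range (2 * k), H (p' i) (p' (i + 1)) =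
      ∏ i ∈ Finset.range (2 * k), H (p i) (p (i + 1)) := by
  by_cases h1 : t (p 1) = p 2
  · obtain ⟨c, hc⟩ := exists_altSeq_of_seq t p k hk hmod
      (alt_propagate t htt p k hk hmod hnb h1)
    exact ⟨p, c, hc, rfl⟩
  · have h0 : t (p 1) = p 0 := (hnb 0).resolve_left h1
    have h2 : t (p 2) = p 3 := by
      rcases hnb 1 with h | h
      · exact h
      · have h' : t (p 2) = p 1 := h
        rw [← h', htt] at h1
        exact absurd rfl h1
    have hmod' : ∀ i j, p (i + 1) = p (j + 1) ↔ i % (2 * k) = j % (2 * k) := by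
      intro i j
      rw [hmod]
      exact ⟨fun h => Nat.ModEq.add_right_cancel' 1 h, fun h => Nat.ModEq.add_right 1 h⟩
    obtain ⟨c, hc⟩ := exists_altSeq_of_seq t (fun i => p (i + 1)) k hk hmod'
      (alt_propagate t htt (fun i => p (i + 1)) k hk hmod' (fun i => hnb (i + 1)) h2)
    refine ⟨_, c, hc, ?_⟩
    refine prod_range_shift (fun i => H (p i) (p (i + 1))) (2 * k) ?_
    have e1 : p (2 * k) = p 0 := by rw [hmod]; simp
    have e2 : p (2 * k + 1) = p (0 + 1) := by rw [hmod]; simp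
    simp only [e1, e2]

end Alt

section Final

lemma prod_list_range (F : ℕ → ℂ) (n : ℕ) :
    ((List.range n).map F).prod = ∏ i ∈ Finset.range n, F i := by
  induction n with
  | zero => simp
  | succ n ih => rw [List.range_succ, List.map_append, List.prod_append, ih,
      Finset.prod_range_succ]; simp

lemma ncard_of_seq {V : Type u} (S : Set V) (p : ℕ → V) (n : ℕ)
    (hmod : ∀ i j, p i = p j ↔ i % n = j % n) (hS : ∀ v, v ∈ S ↔ ∃ i < n, v = p i) :
    S.ncard = n := by
  have h1 : S = p '' (Finset.range n : Set ℕ) := by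
    ext v; rw [hS]; simp [eq_comm]
  rw [h1, Set.ncard_image_of_injOn, Set.ncard_coe_finset, Finset.card_range]
  intro i hi j hj hij
  simp only [Finset.coe_range, Set.mem_Iio] at hi hj
  rw [hmod, Nat.mod_eq_of_lt hi, Nat.mod_eq_of_lt hj] at hij
  exact hij

lemma cycles_perm_disjoint {V : Type u} [Fintype V] [DecidableEq V] (M : MixedGraph V)
    (col : M.graph.Coloring (Fin 2)) (hdisj : CyclesVertexDisjoint M.graph)
    (t : Equiv.Perm V) (ht : ∀ v, t (t v) = v) (htt : ∀ v, M.graph.Adj v (t v))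
    (c d : Equiv.Perm V) (hc : c.IsCycle) (hd : d.IsCycle)
    (hc0 : ∀ x, M.graph.Adj x (t (c x))) (hd0 : ∀ x, M.graph.Adj x (t (d x))) (hne : c ≠ d) :
    c.Disjoint d := by
  by_contra hnd
  unfold Equiv.Perm.Disjoint at hnd
  push Not at hnd
  obtain ⟨v, hcv, hdv⟩ := hnd
  obtain ⟨p, k, hp, hp0, hpa, hpc⟩ := exists_altSeq_of_perm col t ht htt c hc hc0 v hcv
  obtain ⟨r, m, hr, hr0, hra, hrc⟩ := exists_altSeq_of_perm col t ht htt d hd hd0 v hdv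
  have hk := hp.two_le
  have hm := hr.two_le
  obtain ⟨w, hw, hws, hwe, -⟩ := exists_cycle_walk p hpa (2 * k) (by omega) hp.mod
  obtain ⟨w', hw', hws', hwe', -⟩ := exists_cycle_walk r hra (2 * m) (by omega) hr.mod
  have heq : w.toSubgraph = w'.toSubgraph := by
    by_contra hn
    have := hdisj _ _ (isCycleSubgraph_of_walk hw) (isCycleSubgraph_of_walk hw') hn
    have hv1 : v ∈ w.toSubgraph.verts := by
      rw [SimpleGraph.Walk.mem_verts_toSubgraph, hws]
      exact ⟨0, by omega, hp0.symm⟩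
    have hv2 : v ∈ w'.toSubgraph.verts := by
      rw [SimpleGraph.Walk.mem_verts_toSubgraph, hws']
      exact ⟨0, by omega, hr0.symm⟩
    exact Set.disjoint_left.mp this hv1 hv2
  have hcols : ∀ i, col (r (2 * i + 1)) ≠ col v := by
    intro i
    rw [← hrc i]
    exact (col.valid (hra (2 * i))).symm
  have key : ∀ x, c x ≠ x → c x = d x := by
    intro x hx
    obtain ⟨j, hj, rfl⟩ := (hp.supp x).mp hx
    have he : s(p (2 * j), p (2 * j + 1)) ∈ w'.edges := by
      rw [← SimpleGraph.Walk.mem_edges_toSubgraph, ← heq, SimpleGraph.Walk.mem_edges_toSubgraph,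
        hwe]
      exact ⟨2 * j, by omega, rfl⟩
    rw [hwe'] at he
    obtain ⟨i, -, hi⟩ := he
    have hpo : p (2 * j + 1) = t (c (p (2 * j))) := by rw [hp.hc, hp.ht]
    have hcolx := hpc j
    obtain ⟨a, rfl | rfl⟩ : ∃ a, i = 2 * a ∨ i = 2 * a + 1 := ⟨i / 2, by omega⟩
    · have hro : r (2 * a + 1) = t (d (r (2 * a))) := by rw [hr.hc, hr.ht]
      rw [Sym2.eq_iff] at hi
      rcases hi with ⟨h1, h2⟩ | ⟨h1, h2⟩
      · rw [hpo, hro, ← h1] at h2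
        exact t.injective h2
      · rw [h1] at hcolx
        exact absurd hcolx (hcols a)
    · have hro : r (2 * a + 1) = t (r (2 * a + 1 + 1)) := (hr.ht a).symm
      rw [Sym2.eq_iff] at hi
      rcases hi with ⟨h1, h2⟩ | ⟨h1, h2⟩
      · rw [h1] at hcolx
        exact absurd hcolx (hcols a)
      · rw [hpo, hro, ← h1] at h2
        exact absurd (t.injective h2) hx
  apply hne
  exact hc.eq_on_support_inter_nonempty_congr hd
    (fun x hx => key x (by simpa using (Finset.mem_inter.mp hx).1)) (key v hcv)
    (Equiv.Perm.mem_support.mpr hcv)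

lemma det_iff {V : Type u} [Fintype V] [DecidableEq V] (M : MixedGraph V)
    (col : M.graph.Coloring (Fin 2)) (hdisj : CyclesVertexDisjoint M.graph)
    (t : Equiv.Perm V) (ht : ∀ v, t (t v) = v) (htt : ∀ v, M.graph.Adj v (t v)) :
    M.hMatrix.det ≠ 0 ↔ ∀ c : Equiv.Perm V, c.IsCycle → pw (altMat t M.hMatrix) c ≠ -1 := by
  rw [← altMat_det t]
  refine det_ne_zero_iff_pw _ (fun i => hMatrix_ne_zero M (htt i)) ?_
  intro c d hc hd hc0 hd0 hne
  exact cycles_perm_disjoint M col hdisj t ht htt c d hc hd (pw_altMat_ne_zero M t c hc0)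
    (pw_altMat_ne_zero M t d hd0) hne

/-- A bad alternating cyclic permutation yields a bad matching-closed cycle. -/
lemma exists_bad_cycle {V : Type u} [Fintype V] [DecidableEq V] (M : MixedGraph V)
    (col : M.graph.Coloring (Fin 2))
    (t : Equiv.Perm V) (ht : ∀ v, t (t v) = v) (htt : ∀ v, M.graph.Adj v (t v))
    (c : Equiv.Perm V) (hc : c.IsCycle) (hpw : pw (altMat t M.hMatrix) c = -1) :
    ∃ C : M.graph.Subgraph, IsCycleSubgraph C ∧ Even C.verts.ncard ∧
      CycleSig M C (fun s => s % 4 = C.verts.ncard % 4) ∧ ∀ v ∈ C.verts, t v ∈ C.verts := by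
  obtain ⟨v, hcv, -⟩ := id hc
  have hc0 := pw_altMat_ne_zero M t c (by rw [hpw]; norm_num)
  obtain ⟨p, k, hp, hp0, hpa, hpc⟩ := exists_altSeq_of_perm col t ht htt c hc hc0 v hcv
  have hk := hp.two_le
  obtain ⟨w, hw, hws, hwe, hwd⟩ := exists_cycle_walk p hpa (2 * k) (by omega) hp.mod
  have hverts : ∀ v, v ∈ w.toSubgraph.verts ↔ ∃ i < 2 * k, v = p i := by
    intro v; rw [SimpleGraph.Walk.mem_verts_toSubgraph, hws]
  have hcard := ncard_of_seq _ p (2 * k) hp.mod hverts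
  have hverts' : ∀ i, p i ∈ w.toSubgraph.verts := by
    intro i
    rw [hverts]
    exact ⟨i % (2 * k), Nat.mod_lt _ (by omega), by rw [hp.mod, Nat.mod_mod]⟩
  refine ⟨w.toSubgraph, isCycleSubgraph_of_walk hw, ?_, ?_, ?_⟩
  · rw [hcard]; exact even_two_mul k
  · refine ⟨p 0, w, hw, ?_, ?_, ?_⟩
    · rw [SimpleGraph.Walk.verts_toSubgraph]
    · rw [SimpleGraph.Walk.edgeSet_toSubgraph]; rfl
    · rw [hcard]
      change walkSignature M w % 4 = (2 * k) % 4
      rw [signature_iff, hwd, List.map_map]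
      have h1 := hp.pw_eq (M := M) htt
      rw [hpw] at h1
      change ((List.range (2 * k)).map (fun i => M.hMatrix (p i) (p (i + 1)))).prod = _
      rw [prod_list_range]
      have h2 : ((-1 : ℂ) ^ k) * (-1) ^ k = 1 := by rw [← mul_pow]; simp
      linear_combination ((-1 : ℂ) ^ k) * h1 -
        (∏ i ∈ Finset.range (2 * k), M.hMatrix (p i) (p (i + 1))) * h2
  · intro v hv
    obtain ⟨i, hi, rfl⟩ := (hverts v).mp hv
    obtain ⟨a, rfl | rfl⟩ : ∃ a, i = 2 * a ∨ i = 2 * a + 1 := ⟨i / 2, by omega⟩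
    · have h1 : p (2 * a) = p (2 * (a + k - 1) + 2) := by
        rw [hp.mod, show 2 * (a + k - 1) + 2 = 2 * a + 2 * k by omega]
        simp
      rw [h1, hp.ht]
      exact hverts' _
    · rw [← hp.ht, ht]
      exact hverts' _

/-- A bad matching-closed cycle yields a bad cyclic permutation. -/
lemma exists_bad_perm {V : Type u} [Fintype V] [DecidableEq V] (M : MixedGraph V)
    (hdisj : CyclesVertexDisjoint M.graph)
    (t : Equiv.Perm V) (ht : ∀ v, t (t v) = v) (htt : ∀ v, M.graph.Adj v (t v))
    (C : M.graph.Subgraph) (hC : IsCycleSubgraph C) (heven : Even C.verts.ncard)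
    (hsig : CycleSig M C (fun s => s % 4 = C.verts.ncard % 4))
    (hcl : ∀ v ∈ C.verts, t v ∈ C.verts) :
    ∃ c : Equiv.Perm V, c.IsCycle ∧ pw (altMat t M.hMatrix) c = -1 := by
  obtain ⟨a, w, hw, hsupp, hedges, hs⟩ := hsig
  set q := w.length with hq
  have hq3 : 3 ≤ q := hw.three_le_length
  let p : ℕ → V := fun i => w.getVert (i % q)
  have hpi : ∀ i, i ≤ q → p i = w.getVert i := by
    intro i hi
    rcases hi.lt_or_eq with h | h
    · simp [p, Nat.mod_eq_of_lt h]
    · simp [p, h, hq]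
  have hmod : ∀ i j, p i = p j ↔ i % q = j % q := by
    intro i j
    constructor
    · intro h
      have h1 := Nat.mod_lt i (show 0 < q by omega)
      have h2 := Nat.mod_lt j (show 0 < q by omega)
      exact hw.getVert_injOn' (show i % q ≤ w.length - 1 by omega)
        (show j % q ≤ w.length - 1 by omega) h
    · intro h; simp [p, h]
  have hverts : ∀ v, v ∈ C.verts ↔ ∃ i < q, v = p i := by
    intro v
    rw [← hsupp]
    change v ∈ w.support ↔ _
    rw [SimpleGraph.Walk.mem_support_iff_exists_getVert]
    constructor
    · rintro ⟨i, rfl, hi⟩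
      exact ⟨i % q, Nat.mod_lt _ (by omega), by rw [← hpi i hi, hmod, Nat.mod_mod]⟩
    · rintro ⟨i, hi, rfl⟩
      exact ⟨i, (hpi i hi.le).symm, hi.le⟩
  have hcard := ncard_of_seq _ p q hmod hverts
  have hdl : w.darts.length = q := w.length_darts
  have hprod : (w.darts.map fun d => M.hMatrix d.toProd.1 d.toProd.2) =
      (List.range q).map (fun i => M.hMatrix (p i) (p (i + 1))) := by
    refine List.ext_getElem (by simp [hdl]) ?_
    intro i h1 h2
    have hi : i < q := by simpa using h2
    rw [List.getElem_map, List.getElem_map, SimpleGraph.Walk.darts_getElem_eq_getVert,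
      List.getElem_range, hpi i hi.le, hpi (i + 1) hi]
  have hed : ∀ e, e ∈ C.edgeSet → ∃ i < q, e = s(p i, p (i + 1)) := by
    intro e he
    rw [← hedges] at he
    have he' : e ∈ w.darts.map SimpleGraph.Dart.edge := he
    obtain ⟨i, hi, rfl⟩ := List.getElem_of_mem he'
    have hi' : i < q := by simpa [hdl] using hi
    refine ⟨i, hi', ?_⟩
    rw [List.getElem_map, SimpleGraph.Walk.darts_getElem_eq_getVert, hpi i hi'.le, hpi (i + 1) hi']
    rfl
  rw [hcard] at heven hs
  obtain ⟨k, hk⟩ : ∃ k, q = 2 * k := by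
    obtain ⟨k, hk⟩ := heven
    exact ⟨k, by omega⟩
  rw [hk] at hmod hprod hs
  have hnb : ∀ i, t (p (i + 1)) = p (i + 2) ∨ t (p (i + 1)) = p i := by
    intro i
    have hv : p (i + 1) ∈ C.verts := by
      rw [hverts]
      exact ⟨(i + 1) % q, Nat.mod_lt _ (by omega), by rw [hmod, hk, Nat.mod_mod]⟩
    have hadj := no_chord hdisj hC hv (hcl _ hv) (htt _)
    obtain ⟨j, hj, he⟩ := hed s(p (i + 1), t (p (i + 1))) (by simpa using hadj)
    rw [Sym2.eq_iff] at he
    rcases he with ⟨h1, h2⟩ | ⟨h1, h2⟩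
    · left
      rw [h2, hmod]
      rw [hmod] at h1
      exact (Nat.ModEq.add_right 1 h1).symm
    · right
      rw [h2, hmod]
      rw [hmod] at h1
      exact (Nat.ModEq.add_right_cancel' 1 h1).symm
  obtain ⟨p', c, hc, hpp⟩ := exists_alt_shift M.hMatrix t ht p k (by omega) hmod hnb
  refine ⟨c, hc.cyc, ?_⟩
  rw [signature_iff, hprod, prod_list_range] at hs
  rw [hc.pw_eq htt, hpp, hs]
  have h2 : ((-1 : ℂ) ^ k) * (-1) ^ k = 1 := by rw [← mul_pow]; simp
  linear_combination -h2

end Final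

/-- A bipartite cycle-disjoint mixed graph G̃ of order n is
nonsingular iff (a) G has a fractional perfect matching, and (b) for every optimal
fractional matching f and every even cycle C̃_q with σ(C̃_q) ≡ q (mod 4), the set
E₁(C_q) ∩ E₂(G) is nonempty. -/
theorem nonsingular_iff_of_bipartite_cycleDisjoint
    {V : Type u} [Fintype V] [DecidableEq V] (M : MixedGraph V)
    (hbip : M.graph.Colorable 2) (hdisj : CyclesVertexDisjoint M.graph) :
    M.hMatrix.det ≠ 0 ↔
      ((∃ f : Sym2 V → ℝ, IsFracMatching M.graph f ∧
          ∑ e : Sym2 V, f e = (Fintype.card V : ℝ) / 2) ∧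
        ∀ f : Sym2 V → ℝ, IsOptFracMatching M.graph f →
          ∀ C : M.graph.Subgraph, IsCycleSubgraph C → Even C.verts.ncard →
            CycleSig M C (fun s => s % 4 = C.verts.ncard % 4) →
            (cutEdges M.graph C ∩ {e : Sym2 V | f e = 1}).Nonempty) := by
  obtain ⟨col⟩ := hbip
  constructor
  · intro hdet
    obtain ⟨π, hπ⟩ := exists_perm_of_det M hdet
    obtain ⟨t, ht, htt⟩ := exists_tau col π hπ
    refine ⟨⟨matchFun t, matchFun_frac t ht htt, matchFun_sum t ht htt⟩, ?_⟩
    intro f hf C hC heven hsig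
    obtain ⟨r, hr, hrr, hrf⟩ := exists_tau_of_opt t ht htt f hf
    by_contra hempty
    have hcl : ∀ v ∈ C.verts, r v ∈ C.verts := by
      intro v hv
      by_contra hrv
      exact hempty ⟨s(v, r v), ⟨hrr v, v, r v, rfl, hv, hrv⟩, hrf v⟩
    obtain ⟨c, hc, hpw⟩ := exists_bad_perm M hdisj r hr hrr C hC heven hsig hcl
    exact (det_iff M col hdisj r hr hrr).mp hdet c hc hpw
  · rintro ⟨⟨f, hf, hsum⟩, hb⟩
    obtain ⟨π, hπ⟩ := exists_perm_of_frac hf hsum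
    obtain ⟨t, ht, htt⟩ := exists_tau col π hπ
    rw [det_iff M col hdisj t ht htt]
    intro c hc hpw
    obtain ⟨C, hC, heven, hsig, hcl⟩ := exists_bad_cycle M col t ht htt c hc hpw
    obtain ⟨e, ⟨-, a, b, rfl, ha, hb'⟩, he⟩ := hb _ (matchFun_opt t ht htt) C hC heven hsig
    have he' : matchFun t s(a, b) = 1 := he
    rw [matchFun_mk t ht] at he'
    by_cases hab : b = t a
    · rw [hab] at hb'
      exact hb' (hcl a ha)
    · simp [hab] at he'

end MixedPaper
end

section
/- If the underlying graph G of a mixed graph G~ has a unique maximum matching, then r(G~) ≥ 2m(G). -/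
open scoped Classical

namespace MixedPaper

universe u

variable {V : Type u}

/-- A matching covers twice as many vertices as it has edges. -/
theorem matching_card {W : Type u} [Fintype W] {G : SimpleGraph W} (N : G.Subgraph)
    (hN : N.IsMatching) : N.verts.ncard = 2 * N.edgeSet.ncard := by
  have h := N.spanningCoe.sum_degrees_eq_twice_card_edges
  have hd : ∀ v, N.spanningCoe.degree v = if v ∈ N.verts then 1 else 0 := by
    intro v
    split_ifs with hv
    · rw [SimpleGraph.degree_eq_one_iff_existsUnique_adj]
      exact hN hv
    · rw [SimpleGraph.degree_eq_zero]
      intro w hw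
      exact hv (N.edge_vert hw)
  rw [Finset.sum_congr rfl (fun v _ => hd v), Finset.sum_boole] at h
  have h1 : N.spanningCoe.edgeFinset.card = N.edgeSet.ncard := by
    rw [← SimpleGraph.Subgraph.edgeSet_spanningCoe, ← SimpleGraph.coe_edgeFinset,
      Set.ncard_coe_finset]
  have h2 : (Finset.univ.filter (fun v => v ∈ N.verts)).card = N.verts.ncard := by
    rw [← Set.ncard_coe_finset]
    simp
  rw [h1, h2] at h
  exact h

/-- Over `ZMod 2`, a symmetric 0/1 matrix such that exactly one involution is supported on
its nonzero entries has determinant 1. -/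
theorem det_eq_one_of_unique {S : Type*} [Fintype S] [DecidableEq S] (A : Matrix S S (ZMod 2))
    (hsym : ∀ i j, A i j = A j i) (τ : Equiv.Perm S) (hτ : ∀ i, A (τ i) i = 1)
    (hττ : τ⁻¹ = τ)
    (huniq : ∀ σ : Equiv.Perm S, σ⁻¹ = σ → (∀ i, A (σ i) i ≠ 0) → σ = τ) :
    A.det = 1 := by
  have key : A.det = ∑ σ : Equiv.Perm S, ∏ i, A (σ i) i := by
    rw [Matrix.det_apply]
    refine Finset.sum_congr rfl fun σ _ => ?_
    rcases Int.units_eq_one_or (Equiv.Perm.sign σ) with h | h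
    · simp [h]
    · simp [h, ZMod.neg_eq_self_mod_two]
  rw [key, ← Finset.add_sum_erase _ _ (Finset.mem_univ τ)]
  have h0 : ∑ σ ∈ Finset.univ.erase τ, ∏ i, A (σ i) i = 0 := by
    refine Finset.sum_involution (fun σ _ => σ⁻¹) ?_ ?_ ?_ ?_
    · intro σ _
      have : ∏ i, A (σ⁻¹ i) i = ∏ i, A (σ i) i := by
        rw [← Equiv.prod_comp σ]
        refine Finset.prod_congr rfl fun i _ => ?_
        rw [show σ⁻¹ (σ i) = i from σ.symm_apply_apply i, hsym]
      rw [this]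
      exact CharTwo.add_self_eq_zero _
    · intro σ hσ hne heq
      refine (Finset.mem_erase.1 hσ).1 (huniq σ heq fun i hi => hne ?_)
      exact Finset.prod_eq_zero (Finset.mem_univ i) hi
    · intro σ hσ
      refine Finset.mem_erase.2 ⟨fun h => (Finset.mem_erase.1 hσ).1 ?_, Finset.mem_univ _⟩
      rw [← hττ, ← h, inv_inv]
    · intro σ _
      exact inv_inv σ
  rw [h0, add_zero]
  exact Finset.prod_eq_one fun i _ => hτ i

/-- The Hermitian adjacency matrix over the Gaussian integers. -/
noncomputable def gaussMatrix {W : Type u} (M : MixedGraph W) : Matrix W W GaussianInt :=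
  fun u v =>
  if M.arc u v then ⟨0, 1⟩
  else if M.arc v u then ⟨0, -1⟩
  else if M.graph.Adj u v then ⟨1, 0⟩ else ⟨0, 0⟩

theorem gauss_toComplex {W : Type u} [Fintype W] [DecidableEq W] (M : MixedGraph W) (u v : W) :
    GaussianInt.toComplex (gaussMatrix M u v) = M.hMatrix u v := by
  unfold gaussMatrix MixedGraph.hMatrix
  split_ifs <;> simp [GaussianInt.toComplex_def']

theorem gauss_red {W : Type u} (M : MixedGraph W) (u v : W) :
    redTwo (gaussMatrix M u v) = if M.graph.Adj u v then 1 else 0 := by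
  unfold gaussMatrix
  by_cases h1 : M.arc u v
  · simp [h1, M.arc_adj _ _ h1, redTwo]
  by_cases h2 : M.arc v u
  · simp [h1, h2, (M.arc_adj _ _ h2).symm, redTwo]
  by_cases h3 : M.graph.Adj u v
  · simp [h1, h2, h3, redTwo]
  · simp [h1, h2, h3, redTwo]

/-- The matching associated with an involution. -/
def involMatching {W : Type u} {G : SimpleGraph W} (S : Set W) (σ : Equiv.Perm S)
    (hσ : ∀ i, σ (σ i) = i) (hadj : ∀ i : S, G.Adj (σ i).1 i.1) : G.Subgraph where
  verts := S
  Adj u v := ∃ hu : u ∈ S, (σ ⟨u, hu⟩).1 = v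
  adj_sub := by
    rintro u v ⟨hu, rfl⟩
    exact (hadj ⟨u, hu⟩).symm
  edge_vert := by
    rintro u v ⟨hu, _⟩
    exact hu
  symm := by
    constructor
    rintro u v ⟨hu, rfl⟩
    exact ⟨(σ ⟨u, hu⟩).2, by simp [hσ]⟩

theorem involMatching_isMatching {W : Type u} {G : SimpleGraph W} (S : Set W)
    (σ : Equiv.Perm S) (hσ : ∀ i, σ (σ i) = i) (hadj : ∀ i : S, G.Adj (σ i).1 i.1) :
    (involMatching S σ hσ hadj).IsMatching := by
  intro v hv
  refine ⟨(σ ⟨v, hv⟩).1, ⟨hv, rfl⟩, ?_⟩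
  rintro w ⟨_, rfl⟩
  rfl

/-- If the underlying graph of a mixed graph has a unique maximum
matching, then r(G̃) ≥ 2m(G). -/
theorem hRank_ge_of_unique_maximum_matching
    {V : Type u} [Fintype V] [DecidableEq V] (M : MixedGraph V)
    (h : ∃! N : M.graph.Subgraph,
      N.IsMatching ∧ N.edgeSet.ncard = matchingNumber M.graph) :
    2 * matchingNumber M.graph ≤ M.hRank := by
  obtain ⟨N, ⟨hN, hcard⟩, huniq⟩ := h
  have hc := matching_card N hN
  choose f hf hf' using fun v : N.verts => hN v.2
  have hfm : ∀ v : N.verts, f v ∈ N.verts := fun v => (hf v).snd_mem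
  let g : N.verts → N.verts := fun v => ⟨f v, hfm v⟩
  have hg : Function.Involutive g := by
    intro v
    apply Subtype.ext
    exact (hf' (g v) v.1 (hf v).symm).symm
  let τ : Equiv.Perm N.verts := hg.toPerm
  let A : Matrix N.verts N.verts GaussianInt :=
    (gaussMatrix M).submatrix Subtype.val Subtype.val
  have hAe : ∀ i j, (A.map redTwo) i j = if M.graph.Adj i.1 j.1 then 1 else 0 :=
    fun i j => gauss_red M i.1 j.1
  have hdet : (A.map redTwo).det = 1 := by
    refine det_eq_one_of_unique _ ?_ τ ?_ ?_ ?_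
    · intro i j
      rw [hAe, hAe, M.graph.adj_comm]
    · intro i
      rw [hAe, if_pos]
      exact (N.adj_sub (hf i)).symm
    · exact Equiv.ext fun i => rfl
    · intro σ hσ hne
      have h1 : ∀ i, σ (σ i) = i := by
        intro i
        conv_lhs => rw [← hσ]
        rw [hσ]
        nth_rewrite 1 [← hσ]
        simp
      have h2 : ∀ i : N.verts, M.graph.Adj (σ i).1 i.1 := by
        intro i
        by_contra hcon
        apply hne i
        rw [hAe, if_neg hcon]
      have hm := involMatching_isMatching N.verts σ h1 h2
      have hmc := matching_card _ hm
      have hv : (involMatching N.verts σ h1 h2).verts = N.verts := rfl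
      rw [hv] at hmc
      have hE := huniq _ ⟨hm, by omega⟩
      refine Equiv.ext fun i => Subtype.ext ?_
      have : (involMatching N.verts σ h1 h2).Adj i.1 (σ i).1 := ⟨i.2, rfl⟩
      rw [hE] at this
      exact hf' i _ this
  have hA0 : A.det ≠ 0 := by
    intro h0
    have := RingHom.map_det redTwo A
    rw [h0, map_zero, RingHom.mapMatrix_apply, hdet] at this
    exact zero_ne_one this
  have hCd : (M.hMatrix.submatrix (Subtype.val : N.verts → V) Subtype.val).det ≠ 0 := by
    have hm : M.hMatrix.submatrix (Subtype.val : N.verts → V) Subtype.val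
        = A.map GaussianInt.toComplex := by
      ext i j
      exact (gauss_toComplex M i.1 j.1).symm
    rw [hm, ← RingHom.mapMatrix_apply, ← RingHom.map_det]
    intro h0
    exact hA0 (GaussianInt.toComplex_eq_zero.1 h0)
  have hr := Matrix.rank_of_det_ne_zero hCd
  have hle := Matrix.rank_submatrix_le M.hMatrix (Subtype.val : N.verts → V)
    (Subtype.val : N.verts → V)
  rw [hr, ← Nat.card_eq_fintype_card, Nat.card_coe_set_eq, hc, hcard] at hle
  exact hle

end MixedPaper
end

section
/- Let G~ be a mixed graph with underlying graph G, 0 ≤ κ(G) ≤ c(G), and r(G~) = 2m(G) − 2κ(G). Then for every vertex u lying on some even cycle of G: κ(G − u) = κ(G) − 1, m(G − u) = m(G) − 1, r(G~ − u) = r(G~), and r(G~ − u) = 2m(G − u) − 2κ(G − u). -/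
open scoped Classical

namespace MixedPaper

universe u

variable {V : Type u}

/-- Two distinct fixed-point-free involutions along edges yield an even cycle. -/
lemma exists_even_cycle_of_involutions {W : Type u} [Finite W] (G : SimpleGraph W)
    (σ τ : Equiv.Perm W) (hσ : ∀ a, σ (σ a) = a) (hτ : ∀ a, τ (τ a) = a)
    (hσG : ∀ a, G.Adj a (σ a)) (hτG : ∀ a, G.Adj a (τ a)) (hne : σ ≠ τ) :
    ∃ C : G.Subgraph, IsCycleSubgraph C ∧ Even C.verts.ncard := by
  obtain ⟨v, hv⟩ : ∃ v, σ v ≠ τ v := by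
    by_contra h
    push Not at h
    exact hne (Equiv.ext h)
  let K : SimpleGraph W :=
    { Adj := fun a b => b = σ a ∨ b = τ a
      symm := ⟨by
        rintro a b (rfl | rfl)
        · exact Or.inl (hσ a).symm
        · exact Or.inr (hτ a).symm⟩
      loopless := ⟨by
        rintro a (h | h)
        · exact (hσG a).ne h
        · exact (hτG a).ne h⟩ }
  have hK : ∀ a b, K.Adj a b ↔ b = σ a ∨ b = τ a := fun a b => Iff.rfl
  have hprop : ∀ a b, K.Adj a b → σ a ≠ τ a → σ b ≠ τ b := by
    intro a b hab ha hb
    rcases (hK a b).1 hab with rfl | rfl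
    · rw [hσ] at hb
      have := congrArg τ hb
      rw [hτ] at this
      exact ha this.symm
    · rw [hτ] at hb
      have := congrArg σ hb
      rw [hσ] at this
      exact ha this.symm
  have hreach : ∀ w, K.Reachable v w → σ w ≠ τ w := by
    rintro w ⟨p⟩
    induction p with
    | nil => exact hv
    | cons h p ih => exact ih (hprop _ _ h hv)
  let c := K.connectedComponentMk v
  have hadj : ∀ a b, K.Adj a b → a ∈ c.supp → b ∈ c.supp := fun a b h ha =>
    c.mem_supp_of_adj_mem_supp ha h
  let C : G.Subgraph :=
    { verts := c.supp
      Adj := fun a b => a ∈ c.supp ∧ K.Adj a b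
      adj_sub := by
        rintro a b ⟨_, (rfl | rfl)⟩
        · exact hσG a
        · exact hτG a
      edge_vert := fun h => h.1
      symm := ⟨fun a b h => ⟨hadj a b h.2 h.1, h.2.symm⟩⟩ }
  refine ⟨C, ⟨⟨?_⟩, ?_⟩, ?_⟩
  · have h1 := c.connected_toSimpleGraph
    refine h1.mono ?_
    intro a b hab
    exact ⟨a.2, hab⟩
  · intro w hw
    have hw' : σ w ≠ τ w := hreach w (SimpleGraph.ConnectedComponent.exact hw).symm
    have : {x | C.Adj w x} = {σ w, τ w} := by
      ext x
      constructor
      · rintro ⟨_, h⟩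
        exact h
      · intro h
        exact ⟨hw, h⟩
    rw [this, Set.ncard_pair hw']
  · let N : G.Subgraph :=
      { verts := c.supp
        Adj := fun a b => a ∈ c.supp ∧ b = σ a
        adj_sub := by
          rintro a b ⟨_, rfl⟩
          exact hσG a
        edge_vert := fun h => h.1
        symm := ⟨by
          rintro a b ⟨h1, rfl⟩
          exact ⟨hadj a _ (Or.inl rfl) h1, (hσ a).symm⟩⟩ }
    have hN : N.IsMatching := by
      intro w hw
      exact ⟨σ w, ⟨hw, rfl⟩, fun y hy => hy.2⟩
    cases nonempty_fintype W
    have := hN.even_card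
    rw [Set.ncard_eq_toFinset_card']
    exact this

/-- Over `ZMod 2`, the adjacency matrix of a graph with a unique perfect matching is nonsingular. -/
lemma det_adj_zmod2 {W : Type u} [Fintype W] [DecidableEq W] (G : SimpleGraph W)
    (A : Matrix W W (ZMod 2)) (hA : ∀ a b, A a b = if G.Adj a b then 1 else 0)
    (σ : Equiv.Perm W) (hσ : ∀ a, σ (σ a) = a) (hσG : ∀ a, G.Adj a (σ a))
    (hG : ¬ ∃ C : G.Subgraph, IsCycleSubgraph C ∧ Even C.verts.ncard) :
    A.det ≠ 0 := by
  have hdet : A.det = ∑ τ : Equiv.Perm W, ∏ i, A (τ i) i := by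
    rw [Matrix.det_apply]
    refine Finset.sum_congr rfl fun τ _ => ?_
    rcases Int.units_eq_one_or (Equiv.Perm.sign τ) with h | h
    · rw [h, one_smul]
    · rw [h, Units.smul_def, Units.val_neg, Units.val_one, neg_smul, one_smul, ZModModule.neg_eq_self]
  have hsymm : ∀ a b, A a b = A b a := fun a b => by rw [hA, hA, G.adj_comm]
  have hone : ∏ i, A (σ i) i = 1 := by
    refine Finset.prod_eq_one fun i _ => ?_
    rw [hA, if_pos (hσG i).symm]
  have hinv : ∀ τ : Equiv.Perm W, ∏ i, A (τ⁻¹ i) i = ∏ i, A (τ i) i := by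
    intro τ
    rw [← Equiv.prod_comp τ]
    refine Finset.prod_congr rfl fun i _ => ?_
    have : τ⁻¹ (τ i) = i := τ.symm_apply_apply i
    rw [this, hsymm]
  have hσinv : σ⁻¹ = σ := by
    rw [inv_eq_iff_mul_eq_one]
    ext a
    exact hσ a
  rw [hdet, ← Finset.add_sum_erase _ _ (Finset.mem_univ σ), hone]
  rw [Finset.sum_involution (fun τ _ => τ⁻¹)]
  · simp
  · intro τ _
    rw [hinv]
    exact CharTwo.add_self_eq_zero _
  · intro τ hτ hne heq
    apply hG
    have hτG : ∀ a, G.Adj a (τ a) := by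
      intro a
      by_contra h
      apply hne
      refine Finset.prod_eq_zero (Finset.mem_univ a) ?_
      rw [hA, if_neg (fun h' => h h'.symm)]
    have hττ : ∀ a, τ (τ a) = a := by
      intro a
      have : τ⁻¹ (τ a) = a := τ.symm_apply_apply a
      rwa [heq] at this
    exact exists_even_cycle_of_involutions G σ τ hσ hττ hσG hτG (Finset.ne_of_mem_erase hτ).symm
  · intro τ hτ
    refine Finset.mem_erase.2 ⟨fun h => (Finset.ne_of_mem_erase hτ) ?_, Finset.mem_univ _⟩
    rw [← hσinv, ← h, inv_inv]
  · intro τ _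
    simp

/-- The Hermitian adjacency matrix of a graph with a perfect matching and no even cycles
is nonsingular. -/
lemma hMatrix_det_ne_zero {W : Type u} [Fintype W] [DecidableEq W] (M : MixedGraph W)
    (σ : Equiv.Perm W) (hσ : ∀ a, σ (σ a) = a) (hσG : ∀ a, M.graph.Adj a (σ a))
    (hG : ¬ ∃ C : M.graph.Subgraph, IsCycleSubgraph C ∧ Even C.verts.ncard) :
    M.hMatrix.det ≠ 0 := by
  let H : Matrix W W GaussianInt := fun u v =>
    if M.arc u v then ⟨0, 1⟩ else if M.arc v u then ⟨0, -1⟩ else if M.graph.Adj u v then 1 else 0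
  have hH : GaussianInt.toComplex.mapMatrix H = M.hMatrix := by
    ext a b
    change GaussianInt.toComplex (H a b) = M.hMatrix a b
    simp only [H, MixedGraph.hMatrix]
    split_ifs <;> simp [GaussianInt.toComplex_def]
  let φ : GaussianInt →+* ZMod 2 := Zsqrtd.lift ⟨1, by decide⟩
  have hφ : (φ.mapMatrix H).det ≠ 0 := by
    refine det_adj_zmod2 M.graph _ ?_ σ hσ hσG hG
    intro a b
    have h1 := M.arc_adj a b
    have h2 := fun h => (M.arc_adj b a h).symm
    change φ (H a b) = _
    simp only [H]
    split_ifs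
    all_goals first
      | (exact absurd (h1 ‹_›) ‹_›)
      | (exact absurd (h2 ‹_›) ‹_›)
      | (simp [φ, Zsqrtd.lift])
  rw [← hH, ← RingHom.map_det]
  intro h
  rw [GaussianInt.toComplex_eq_zero] at h
  rw [← RingHom.map_det, h, map_zero] at hφ
  exact hφ rfl

lemma matching_verts {V : Type u} [Finite V] {G : SimpleGraph V} (N : G.Subgraph)
    (h : N.IsMatching) : N.verts.ncard = 2 * N.edgeSet.ncard := by
  cases nonempty_fintype V
  have h' := h
  rw [SimpleGraph.Subgraph.isMatching_iff_forall_degree] at h'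
  have := N.coe.sum_degrees_eq_twice_card_edges
  simp only [SimpleGraph.Subgraph.coe_degree] at this
  rw [Finset.sum_congr rfl (fun v _ => (show _ = 1 by convert h' v.1 v.2))] at this
  rw [← N.image_coe_edgeSet_coe, Set.ncard_image_of_injective _
    (Sym2.map.injective Subtype.val_injective)]
  rw [Set.ncard_eq_toFinset_card' N.coe.edgeSet, ← Nat.card_coe_set_eq, Nat.card_eq_fintype_card]
  rw [Finset.sum_const, smul_eq_mul, mul_one, Finset.card_univ] at this
  exact this

lemma matching_bddAbove {V : Type u} [Finite V] (G : SimpleGraph V) :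
    BddAbove {k | ∃ N : G.Subgraph, N.IsMatching ∧ N.edgeSet.ncard = k} := by
  refine ⟨Nat.card V, ?_⟩
  rintro k ⟨N, hN, rfl⟩
  have := matching_verts N hN
  have h2 := Set.ncard_le_card N.verts
  omega

lemma exists_max_matching {V : Type u} [Finite V] (G : SimpleGraph V) :
    ∃ N : G.Subgraph, N.IsMatching ∧ N.edgeSet.ncard = matchingNumber G :=
  Nat.sSup_mem (s := {k | ∃ N : G.Subgraph, N.IsMatching ∧ N.edgeSet.ncard = k})
    ⟨_, ⊥, fun _ hv => hv.elim, rfl⟩ (matching_bddAbove G)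

lemma matchingNumber_delete {V : Type u} [Finite V] (G : SimpleGraph V) (u : V) :
    matchingNumber G ≤ matchingNumber (G.induce {u}ᶜ) + 1 := by
  obtain ⟨N, hN, hm⟩ := exists_max_matching G
  let N' : (G.induce {u}ᶜ).Subgraph :=
    { verts := {w | w.1 ∈ N.verts ∧ ¬ N.Adj u w.1}
      Adj := fun a b => N.Adj a.1 b.1
      adj_sub := fun h => N.adj_sub h
      edge_vert := by
        intro a b h
        refine ⟨N.edge_vert h, fun h' => b.2 ?_⟩
        exact hN.eq_of_adj_left h h'.symm
      symm := ⟨fun a b h => SimpleGraph.Subgraph.Adj.symm h⟩ }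
  have hN' : N'.IsMatching := by
    intro w hw
    obtain ⟨x, hx, hu⟩ := hN hw.1
    have hxu : x ≠ u := by
      rintro rfl
      exact hw.2 hx.symm
    exact ⟨⟨x, hxu⟩, hx, fun y hy => Subtype.ext (hu _ hy)⟩
  have h1 := matching_verts N hN
  have h2 := matching_verts N' hN'
  have h3 : N'.edgeSet.ncard ≤ matchingNumber (G.induce {u}ᶜ) :=
    le_csSup (matching_bddAbove _) ⟨N', hN', rfl⟩
  have h4 : N.verts.ncard ≤ N'.verts.ncard + 2 := by
    obtain ⟨p, hp⟩ : ∃ p, ∀ w, N.Adj u w → w = p := by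
      by_cases hu : u ∈ N.verts
      · obtain ⟨p, hp, hpu⟩ := hN hu
        exact ⟨p, hpu⟩
      · exact ⟨u, fun w hw => (hu (N.edge_vert hw)).elim⟩
    have hsub : N.verts ⊆ (Subtype.val '' N'.verts) ∪ {u, p} := by
      intro w hw
      by_cases hwu : w = u
      · right; left; exact hwu
      by_cases hwp : N.Adj u w
      · right; right; exact hp w hwp
      · left; exact ⟨⟨w, hwu⟩, ⟨hw, hwp⟩, rfl⟩
    calc N.verts.ncard ≤ _ := Set.ncard_le_ncard hsub (Set.toFinite _)
      _ ≤ _ := Set.ncard_union_le _ _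
      _ ≤ _ := by
        rw [Set.ncard_image_of_injective _ Subtype.val_injective]
        exact Nat.add_le_add_left ((Set.ncard_insert_le _ _).trans (by simp)) _
  omega

/-- Even cycles of an induced subgraph inject into those of the graph inside the vertex set. -/
lemma evenCycleCount_induce {V : Type u} [Finite V] (G : SimpleGraph V) (S : Set V) :
    evenCycleCount (G.induce S) ≤
      {C : G.Subgraph | (IsCycleSubgraph C ∧ Even C.verts.ncard) ∧ C.verts ⊆ S}.ncard := by
  let f : G.induce S →g G := (SimpleGraph.Embedding.induce S).toHom
  have hf : ∀ x, f x = x.1 := fun _ => rfl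
  have hfi : Function.Injective f := Subtype.val_injective
  refine Set.ncard_le_ncard_of_injOn (fun C => C.map f) ?_ ?_ (Set.toFinite _)
  · rintro C ⟨⟨hc, hd⟩, he⟩
    refine ⟨⟨⟨?_, ?_⟩, ?_⟩, ?_⟩
    · constructor
      refine hc.coe.map ⟨fun v => ⟨f v.1, v.1, v.2, rfl⟩, ?_⟩ ?_
      · intro a b hab
        exact ⟨a.1, b.1, hab, rfl, rfl⟩
      · rintro ⟨_, x, hx, rfl⟩
        exact ⟨⟨x, hx⟩, rfl⟩
    · rintro _ ⟨x, hx, rfl⟩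
      rw [← hd x hx, ← Set.ncard_image_of_injective _ hfi]
      congr 1
      ext y
      constructor
      · rintro ⟨a, b, hab, h1, rfl⟩
        obtain rfl := hfi h1
        exact ⟨b, hab, rfl⟩
      · rintro ⟨b, hb, rfl⟩
        exact ⟨x, b, hb, rfl, rfl⟩
    · rw [SimpleGraph.Subgraph.map_verts, Set.ncard_image_of_injective _ hfi]
      exact he
    · rintro _ ⟨x, hx, rfl⟩
      exact x.2
  · intro C _ D _ h
    have key : ∀ E : (G.induce S).Subgraph, ∀ a b, E.Adj a b ↔ (E.map f).Adj a.1 b.1 := by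
      intro E a b
      constructor
      · intro h
        exact ⟨a, b, h, rfl, rfl⟩
      · rintro ⟨a', b', h, h1, h2⟩
        obtain rfl : a' = a := hfi h1
        obtain rfl : b' = b := hfi h2
        exact h
    have h' : C.map f = D.map f := h
    refine SimpleGraph.Subgraph.ext ?_ ?_
    · have := congrArg SimpleGraph.Subgraph.verts h'
      exact hfi.image_injective this
    · funext a b
      exact propext (by rw [key C, key D, h'])

lemma evenCycleCount_delete {V : Type u} [Finite V] (G : SimpleGraph V) (u : V)
    (hu : OnEvenCycle G u) : evenCycleCount (G.induce {u}ᶜ) + 1 ≤ evenCycleCount G := by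
  obtain ⟨C, hC, he, hm⟩ := hu
  refine Nat.succ_le_of_lt ((evenCycleCount_induce G _).trans_lt ?_)
  refine Set.ncard_lt_ncard ?_ (Set.toFinite _)
  refine ⟨fun D hD => hD.1, fun h => ?_⟩
  exact (h ⟨hC, he⟩ : _ ∧ _).2 hm rfl

lemma hRank_induce_le {V : Type u} [Fintype V] [DecidableEq V] (M : MixedGraph V) (S : Set V)
    [Fintype S] [DecidableEq S] : (M.induce S).hRank ≤ M.hRank :=
  Matrix.rank_submatrix_le M.hMatrix Subtype.val Subtype.val

lemma hRank_base {V : Type u} [Fintype V] [DecidableEq V] (M : MixedGraph V)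
    (h0 : ¬ ∃ C : M.graph.Subgraph, IsCycleSubgraph C ∧ Even C.verts.ncard) :
    2 * matchingNumber M.graph ≤ M.hRank := by
  obtain ⟨N, hN, hm⟩ := exists_max_matching M.graph
  have hN' := hN
  choose s hs hs' using hN'
  let g : N.verts → N.verts := fun a => ⟨s a.2, N.edge_vert (hs a.2).symm⟩
  have hg : Function.Involutive g := by
    intro a
    apply Subtype.ext
    exact (hs' (g a).2 a.1 (hs a.2).symm).symm
  have hdet : (M.induce N.verts).hMatrix.det ≠ 0 := by
    refine hMatrix_det_ne_zero _ hg.toPerm hg (fun a => N.adj_sub (hs a.2)) ?_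
    rintro ⟨C, hC⟩
    have h1 := evenCycleCount_induce M.graph N.verts
    have h2 : 0 < evenCycleCount (M.graph.induce N.verts) :=
      (Set.ncard_pos (Set.toFinite _)).2 ⟨C, hC⟩
    obtain ⟨D, hD⟩ := (Set.ncard_pos (Set.toFinite _)).1 (h2.trans_le h1)
    exact h0 ⟨D, hD.1⟩
  have h3 := Matrix.rank_of_det_ne_zero hdet
  have h4 := hRank_induce_le M N.verts
  unfold MixedGraph.hRank at h4 ⊢
  rw [h3, ← Nat.card_eq_fintype_card, Nat.card_coe_set_eq, matching_verts N hN, hm] at h4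
  exact h4

/-- The general lower bound `2m - 2κ ≤ r`. -/
lemma hRank_lower_bound (k : ℕ) : ∀ {V : Type u} [Fintype V] [DecidableEq V] (M : MixedGraph V),
    evenCycleCount M.graph ≤ k →
    2 * matchingNumber M.graph ≤ M.hRank + 2 * evenCycleCount M.graph := by
  induction k with
  | zero =>
    intro V _ _ M hk
    have := hRank_base M (by
      rintro ⟨C, hC⟩
      have : 0 < evenCycleCount M.graph := (Set.ncard_pos (Set.toFinite _)).2 ⟨C, hC⟩
      omega)
    omega
  | succ k ih =>
    intro V _ _ M hk
    by_cases h0 : ∃ C : M.graph.Subgraph, IsCycleSubgraph C ∧ Even C.verts.ncard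
    · obtain ⟨C, hC, he⟩ := h0
      obtain ⟨u, hu⟩ := hC.1.nonempty
      have h1 := evenCycleCount_delete M.graph u ⟨C, hC, he, hu⟩
      have h2 := matchingNumber_delete M.graph u
      have h3 := hRank_induce_le M {u}ᶜ
      have h4 := ih (M.induce {u}ᶜ) (by change evenCycleCount (M.graph.induce {u}ᶜ) ≤ k; omega)
      change 2 * matchingNumber (M.graph.induce {u}ᶜ) ≤
        _ + 2 * evenCycleCount (M.graph.induce {u}ᶜ) at h4
      omega
    · have := hRank_base M h0
      omega

/-- If 0 ≤ κ(G) ≤ c(G) and r(G̃) = 2m(G) − 2κ(G), then for every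
vertex u on an even cycle of G: κ(G−u) = κ(G) − 1, m(G−u) = m(G) − 1,
r(G̃−u) = r(G̃) and r(G̃−u) = 2m(G−u) − 2κ(G−u). -/
theorem vertex_deletion_of_hRank_eq_lower_bound
    {V : Type u} [Fintype V] [DecidableEq V] (M : MixedGraph V)
    (hκc : (evenCycleCount M.graph : ℤ) ≤ cyclomatic M.graph)
    (hr : (M.hRank : ℤ) =
      2 * (matchingNumber M.graph : ℤ) - 2 * (evenCycleCount M.graph : ℤ)) :
    ∀ u : V, OnEvenCycle M.graph u →
      (evenCycleCount (M.induce {u}ᶜ).graph : ℤ) = (evenCycleCount M.graph : ℤ) - 1 ∧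
      (matchingNumber (M.induce {u}ᶜ).graph : ℤ) = (matchingNumber M.graph : ℤ) - 1 ∧
      (M.induce {u}ᶜ).hRank = M.hRank ∧
      ((M.induce {u}ᶜ).hRank : ℤ) =
        2 * (matchingNumber (M.induce {u}ᶜ).graph : ℤ) -
          2 * (evenCycleCount (M.induce {u}ᶜ).graph : ℤ) := by
  intro u hu
  have h1 := evenCycleCount_delete M.graph u hu
  have h2 := matchingNumber_delete M.graph u
  have h3 := hRank_induce_le M {u}ᶜ
  have h4 := hRank_lower_bound _ (M.induce {u}ᶜ) le_rfl
  change evenCycleCount (M.induce {u}ᶜ).graph + 1 ≤ _ at h1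
  change _ ≤ matchingNumber (M.induce {u}ᶜ).graph + 1 at h2
  refine ⟨?_, ?_, ?_, ?_⟩ <;> omega

end MixedPaper
end
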